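/- arXiv:2008.00361 — 2 statements merged into one kernel-verified Lean document; each statement's English description precedes it below -/
import Mathlib

section
/- For all integers k ≥ 1, s ≥ 0, r ≥ 0 with s even, r odd and s + r < k, GR_k((k−s−r)P3, sK3, rH3) = ⌊32·5^((s−2)/2)⌋·17^((r−1)/2) + 1, where ⌊32·5^((s−2)/2)⌋ denotes the floor of the real number 32·5^((s−2)/2) (so it equals 32·5^((s−2)/2) when s ≥ 2, and equals 6 when s = 0). -/
open SimpleGraph

/-- A rainbow triangle in an edge-coloring of a complete graph: three distinct
vertices whose three pairwise edges receive three pairwise distinct colors. -/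
def HasRainbowTriangle {n k : ℕ} (c : Fin n → Fin n → Fin k) : Prop :=
  ∃ u v w : Fin n, u ≠ v ∧ u ≠ w ∧ v ≠ w ∧
    c u v ≠ c u w ∧ c u v ≠ c v w ∧ c u w ≠ c v w

/-- A Gallai `k`-coloring of `K_n`: a symmetric edge-coloring with no rainbow triangle. -/
def IsGallaiColoring {n k : ℕ} (c : Fin n → Fin n → Fin k) : Prop :=
  (∀ u v, c u v = c v u) ∧ ¬ HasRainbowTriangle c

/-- A monochromatic copy of the graph `F` in color `i`: an injection of the vertices
of `F` into the vertices of `K_n` mapping every edge of `F` to an edge colored `i`. -/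
def HasMonoCopy {V : Type} (F : SimpleGraph V) {n k : ℕ}
    (c : Fin n → Fin n → Fin k) (i : Fin k) : Prop :=
  ∃ f : V → Fin n, Function.Injective f ∧ ∀ a b, F.Adj a b → c (f a) (f b) = i

/-- The Gallai-Ramsey number `GR(F₁, …, F_k)`: the least `n` such that every Gallai
`k`-coloring of `K_n` contains, for some color `i`, a monochromatic copy of `Fᵢ`
in color `i`. -/
noncomputable def GR (k : ℕ) (F : Fin k → Σ V : Type, SimpleGraph V) : ℕ :=
  sInf {n : ℕ | ∀ c : Fin n → Fin n → Fin k, IsGallaiColoring c →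
    ∃ i : Fin k, HasMonoCopy (F i).2 c i}

/-- The triangle `K₃`. -/
def GK3 : SimpleGraph (Fin 3) := ⊤

/-- The path `P₃` on three vertices (edges 0–1 and 1–2). -/
def GP3 : SimpleGraph (Fin 3) := SimpleGraph.fromRel (fun a _ => a = 1)

/-- `H₁`: a `K₄` on `{0,1,2,3}` together with the extra vertex `4` adjacent to
exactly the vertex `3`. -/
def GH1 : SimpleGraph (Fin 5) :=
  SimpleGraph.fromRel (fun a b => (a ≠ 4 ∧ b ≠ 4) ∨ (a = 3 ∧ b = 4))

/-- `H₂`: `K₅` minus the two edges 0–1 and 1–2 of a path on three vertices. -/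
def GH2 : SimpleGraph (Fin 5) :=
  (⊤ : SimpleGraph (Fin 5)) \
    SimpleGraph.fromRel (fun a b => (a = 0 ∧ b = 1) ∨ (a = 1 ∧ b = 2))

/-- `H₃`: `K₅` minus the edge 0–1. -/
def GH3 : SimpleGraph (Fin 5) :=
  (⊤ : SimpleGraph (Fin 5)) \ SimpleGraph.fromRel (fun a b => a = 0 ∧ b = 1)
/-- The family of graphs for `GR_k((k-s-r)P₃, sK₃, rH₃)`: the graph `H₃` in each of
the first `r` colors, the triangle `K₃` in each of the next `s` colors, and the path
`P₃` in each of the remaining `k - s - r` colors. -/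
def mixPKH (k s r : ℕ) : Fin k → Σ V : Type, SimpleGraph V :=
  fun i =>
    if (i : ℕ) < r then ⟨Fin 5, GH3⟩
    else if (i : ℕ) < r + s then ⟨Fin 3, GK3⟩
    else ⟨Fin 3, GP3⟩

/-!
`P₃`, `K₄` minus an edge and `K₅` minus an edge are the graphs of levels `1`, `2` and `3`: a vertex
joined completely to a set in some colour lowers the level forbidden there in that colour by one.

The upper bound even holds with `K₄` minus an edge in place of `K₃`, and is proved by induction on
the vertex set `X`. By Gallai's theorem, either `X` splits into two parts joined by a single colour,
or it is partitioned so that the edges between the parts have two colours, each pair of parts is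
joined by one of them, and every vertex sends both colours to other parts. In the second case both
colours drop a level inside every part. If they drop to level `1` in all parts, keep only two
vertices of each part: the remaining set has at most `10`, `16` or `34` vertices, which yields the
factors `5`, `8` and `17`. If some part does not drop to level `1`, its neighbourhoods in the two
colours contain correspondingly smaller cliques, and adding up their orders suffices.

For the lower bound start with one edge of a colour avoiding `P₃` and substitute repeatedly into
the two-colourings of `K₅`, `K₈` and `K₁₇` given by circulant graphs, or into a `K₂` or `K₃` of a
single colour. The last colour avoiding `K₅` minus an edge contributes `8` together with a colour
avoiding `K₃`, which then leaves another colour avoiding `K₃` for a factor `2`, or it contributes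
`3` if there is no such colour; this is where the floor comes from.
-/

namespace GallaiRamsey

open Finset

section AlmostClique

open scoped Classical

variable {V : Type*} {G H : SimpleGraph V} {X Y A B : Finset V} {m n : ℕ} {v w : V}

/-- The neighbours of `v` in the graph `G` that lie in the finite vertex set `X`. -/
noncomputable def neighborsIn (G : SimpleGraph V) (X : Finset V) (v : V) : Finset V :=
  {w ∈ X | G.Adj v w}

@[simp]
lemma mem_neighborsIn : w ∈ neighborsIn G X v ↔ w ∈ X ∧ G.Adj v w := by
  simp [neighborsIn]

lemma neighborsIn_subset : neighborsIn G X v ⊆ X :=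
  filter_subset _ _

lemma neighborsIn_mono (hXY : X ⊆ Y) : neighborsIn G X v ⊆ neighborsIn G Y v :=
  filter_subset_filter _ hXY

/-- `AlmostCliqueFreeOn G n X`: inside `X`, the graph `G` contains no `K_{n+2}` minus an edge.
It is encoded recursively: deleting a vertex of full degree leaves a `K_{n+1}` minus an edge, and
`K_2` minus an edge is just a pair of vertices. -/
def AlmostCliqueFreeOn (G : SimpleGraph V) : ℕ → Finset V → Prop
  | 0, X => #X ≤ 1
  | n + 1, X => ∀ v ∈ X, AlmostCliqueFreeOn G n (neighborsIn G X v)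

lemma AlmostCliqueFreeOn.mono (h : AlmostCliqueFreeOn G n Y) (hXY : X ⊆ Y) :
    AlmostCliqueFreeOn G n X := by
  induction n generalizing X Y with
  | zero => exact (card_le_card hXY).trans h
  | succ n ih => exact fun v hv => ih (h v (hXY hv)) (neighborsIn_mono hXY)

lemma AlmostCliqueFreeOn.anti (h : AlmostCliqueFreeOn H n X) (hGH : G ≤ H) :
    AlmostCliqueFreeOn G n X := by
  induction n generalizing X with
  | zero => exact h
  | succ n ih =>
    exact fun v hv => ih ((h v hv).mono (monotone_filter_right _ fun _ _ hw => hGH hw))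

lemma AlmostCliqueFreeOn.succ (h : AlmostCliqueFreeOn G n X) : AlmostCliqueFreeOn G (n + 1) X :=
  fun _ _ => h.mono neighborsIn_subset

lemma AlmostCliqueFreeOn.eq_of_adj (h : AlmostCliqueFreeOn G 1 X) {x y : V} (hv : v ∈ X)
    (hx : x ∈ X) (hy : y ∈ X) (hvx : G.Adj v x) (hvy : G.Adj v y) : x = y :=
  card_le_one.1 (h v hv) x (mem_neighborsIn.2 ⟨hx, hvx⟩) y (mem_neighborsIn.2 ⟨hy, hvy⟩)

/-- Joining an `m`-clique to `A` raises the level of every almost-clique of `A` by `m`. -/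
lemma AlmostCliqueFreeOn.of_isCompleteBetween (h : AlmostCliqueFreeOn G (n + m) X) (hA : A ⊆ X)
    (hB : B ⊆ X) (hAB : G.IsCompleteBetween A B) (hm : ¬ G.CliqueFreeOn B m) :
    AlmostCliqueFreeOn G n A := by
  induction m generalizing X B with
  | zero => exact h.mono hA
  | succ m ih =>
    simp only [CliqueFreeOn, not_forall, not_not] at hm
    obtain ⟨K, hKB, hK⟩ := hm
    obtain ⟨v, hv⟩ := card_pos.1 (hK.card_eq ▸ m.succ_pos : 0 < #K)
    have hvB : v ∈ B := hKB hv
    refine ih (h v (hB hvB)) (B := K.erase v)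
      (fun a ha => mem_neighborsIn.2 ⟨hA ha, (hAB ha hvB).symm⟩) (fun b hb => ?_)
      (fun a ha b hb => hAB ha (hKB (mem_of_mem_erase hb))) (fun hfree => ?_)
    · obtain ⟨hbv, hbK⟩ := mem_erase.1 hb
      exact mem_neighborsIn.2 ⟨hB (hKB hbK), hK.isClique hv hbK hbv.symm⟩
    · exact hfree subset_rfl (hK.erase_of_mem hv)

lemma AlmostCliqueFreeOn.of_isCompleteBetween_nonempty (h : AlmostCliqueFreeOn G (n + 1) X)
    (hA : A ⊆ X) (hB : B ⊆ X) (hAB : G.IsCompleteBetween A B) (hne : B.Nonempty) :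
    AlmostCliqueFreeOn G n A := by
  obtain ⟨b, hb⟩ := hne
  exact h.of_isCompleteBetween hA hB hAB fun hfree =>
    hfree (t := {b}) (by simpa using hb) (by simp [isNClique_iff])

lemma AlmostCliqueFreeOn.cliqueFreeOn (h : AlmostCliqueFreeOn G n X) :
    G.CliqueFreeOn X (n + 2) := by
  induction n generalizing X with
  | zero => exact cliqueFreeOn_of_card_lt _ (Nat.lt_succ_of_le h)
  | succ n ih =>
    intro K hKX hK
    obtain ⟨v, hv⟩ := card_pos.1 (hK.card_eq ▸ (n + 2).succ_pos : 0 < #K)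
    refine ih (h v (hKX hv)) (t := K.erase v) (fun w hw => ?_) (hK.erase_of_mem hv)
    obtain ⟨hwv, hwK⟩ := mem_erase.1 hw
    exact mem_neighborsIn.2 ⟨hKX hwK, hK.isClique hv hwK hwv.symm⟩

lemma cliqueFreeOn_neighborsIn (h : G.CliqueFreeOn X (n + 1)) (hv : v ∈ X) :
    G.CliqueFreeOn (neighborsIn G X v) n :=
  CliqueFreeOn.subset G (fun _ hw => mem_neighborsIn.1 hw) (CliqueFreeOn.of_succ G h hv)

lemma almostCliqueFreeOn_of_cliqueFreeOn (h : G.CliqueFreeOn X (n + 2)) :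
    AlmostCliqueFreeOn G (n + 1) X := by
  induction n generalizing X with
  | zero =>
    refine fun v hv => (card_eq_zero.2 (eq_empty_of_forall_notMem fun w hw => ?_)).trans_le
      zero_le_one
    obtain ⟨hwX, hvw⟩ := mem_neighborsIn.1 hw
    exact (cliqueFreeOn_two G).1 h hv hwX hvw.ne hvw
  | succ n ih => exact fun v hv => ih (cliqueFreeOn_neighborsIn h hv)

lemma exists_isNClique_of_not_almostCliqueFreeOn (h : ¬ AlmostCliqueFreeOn G n X) :
    ∃ K ⊆ X, G.IsNClique n K ∧
      ∃ a ∈ X, ∃ b ∈ X, a ≠ b ∧ ∀ w ∈ K, G.Adj w a ∧ G.Adj w b := by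
  induction n generalizing X with
  | zero =>
    obtain ⟨a, ha, b, hb, hab⟩ := one_lt_card.1 (not_le.1 h)
    exact ⟨∅, empty_subset X, by simp [isNClique_iff], a, ha, b, hb, hab, by simp⟩
  | succ n ih =>
    simp only [AlmostCliqueFreeOn, not_forall] at h
    obtain ⟨v, hv, hfree⟩ := h
    obtain ⟨K, hK, hKn, a, ha, b, hb, hab, hadj⟩ := ih hfree
    rw [mem_neighborsIn] at ha hb
    refine ⟨insert v K, insert_subset hv (hK.trans neighborsIn_subset),
      hKn.insert fun w hw => (mem_neighborsIn.1 (hK hw)).2, a, ha.1, b, hb.1, hab, fun w hw => ?_⟩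
    rcases mem_insert.1 hw with rfl | hw
    · exact ⟨ha.2, hb.2⟩
    · exact hadj w hw

lemma card_neighborsIn_sup_le (X : Finset V) (v : V) :
    #(neighborsIn (G ⊔ H) X v) ≤ #(neighborsIn G X v) + #(neighborsIn H X v) :=
  (card_le_card fun w => by simp only [mem_neighborsIn, sup_adj, mem_union]; tauto).trans
    (card_union_le (neighborsIn G X v) (neighborsIn H X v))

lemma card_le_one_add_card_neighborsIn (h : (G ⊔ H).IsClique X) (hv : v ∈ X) :
    #X ≤ 1 + #(neighborsIn G X v) + #(neighborsIn H X v) := by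
  have hrest : X.erase v ⊆ neighborsIn (G ⊔ H) X v := fun w hw =>
    mem_neighborsIn.2 ⟨mem_of_mem_erase hw, h hv (mem_of_mem_erase hw) (ne_of_mem_erase hw).symm⟩
  have := card_le_card hrest
  have := card_erase_add_one hv
  have := card_neighborsIn_sup_le (G := G) (H := H) X v
  omega

lemma card_lt_of_cliqueFreeOn_two (h : (G ⊔ H).IsClique X) (hG : G.CliqueFreeOn X 2)
    (hH : H.CliqueFreeOn X n) : #X < n := by
  by_contra! hn
  obtain ⟨Y, hYX, rfl⟩ := exists_subset_card_eq hn
  refine hH (mod_cast hYX) ⟨fun x hx y hy hxy => ?_, rfl⟩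
  exact (h (hYX hx) (hYX hy) hxy).resolve_left ((cliqueFreeOn_two G).1 hG (hYX hx) (hYX hy) hxy)

lemma card_le_five_of_cliqueFreeOn (h : (G ⊔ H).IsClique X) (hG : G.CliqueFreeOn X 3)
    (hH : H.CliqueFreeOn X 3) : #X ≤ 5 := by
  rcases X.eq_empty_or_nonempty with rfl | ⟨v, hv⟩
  · simp
  have hGv : #(neighborsIn G X v) < 3 :=
    card_lt_of_cliqueFreeOn_two (h.subset (coe_subset.2 neighborsIn_subset))
      (cliqueFreeOn_neighborsIn hG hv) (.subset _ (coe_subset.2 neighborsIn_subset) hH)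
  have hHv : #(neighborsIn H X v) < 3 :=
    card_lt_of_cliqueFreeOn_two (sup_comm G H ▸ h.subset (coe_subset.2 neighborsIn_subset))
      (cliqueFreeOn_neighborsIn hH hv) (.subset _ (coe_subset.2 neighborsIn_subset) hG)
  have := card_le_one_add_card_neighborsIn h hv
  omega

lemma even_sum_card_neighborsIn (G : SimpleGraph V) (X : Finset V) :
    Even (∑ v ∈ X, #(neighborsIn G X v)) := by
  have hdeg (v : X) : (G.induce (X : Set V)).degree v = #(neighborsIn G X v) := by
    rw [← card_neighborFinset_eq_degree, ← card_map (Function.Embedding.subtype _)]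
    congr 1
    ext w
    simp [and_comm]
  rw [← sum_coe_sort, ← Finset.sum_congr rfl fun v _ => hdeg v, sum_degrees_eq_twice_card_edges]
  exact even_two_mul _

lemma card_le_eight_of_cliqueFreeOn (h : (G ⊔ H).IsClique X) (hG : G.CliqueFreeOn X 3)
    (hH : H.CliqueFreeOn X 4) : #X ≤ 8 := by
  by_contra! hX
  have hGv {v} (hv : v ∈ X) : #(neighborsIn G X v) < 4 :=
    card_lt_of_cliqueFreeOn_two (h.subset (coe_subset.2 neighborsIn_subset))
      (cliqueFreeOn_neighborsIn hG hv) (.subset _ (coe_subset.2 neighborsIn_subset) hH)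
  have hHv {v} (hv : v ∈ X) : #(neighborsIn H X v) ≤ 5 :=
    card_le_five_of_cliqueFreeOn (h.subset (coe_subset.2 neighborsIn_subset))
      (.subset _ (coe_subset.2 neighborsIn_subset) hG) (cliqueFreeOn_neighborsIn hH hv)
  have hdeg {v} (hv : v ∈ X) : #X = 9 ∧ #(neighborsIn G X v) = 3 := by
    have := card_le_one_add_card_neighborsIn h hv
    have := hGv hv
    have := hHv hv
    omega
  obtain ⟨v, hv⟩ := card_pos.1 (by omega : 0 < #X)
  have heven := even_sum_card_neighborsIn G X
  rw [sum_congr rfl fun v hv => (hdeg hv).2, sum_const, (hdeg hv).1] at heven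
  exact absurd heven (by decide)

end AlmostClique

section Coloring

variable {V κ : Type*} {c : Sym2 V → κ} {K : Set κ} {i : κ} {u v w : V}

/-- The graph of the edges of colour `i`. Edge colourings of complete graphs are functions on
unordered pairs; their values on the diagonal are irrelevant. -/
def colorGraph (c : Sym2 V → κ) (i : κ) : SimpleGraph V :=
  fromEdgeSet {e | c e = i}

/-- The graph of the edges whose colour lies outside `K`. -/
def otherGraph (c : Sym2 V → κ) (K : Set κ) : SimpleGraph V :=
  fromEdgeSet {e | c e ∉ K}

@[simp]
lemma colorGraph_adj : (colorGraph c i).Adj u v ↔ c s(u, v) = i ∧ u ≠ v := by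
  simp [colorGraph]

@[simp]
lemma otherGraph_adj : (otherGraph c K).Adj u v ↔ c s(u, v) ∉ K ∧ u ≠ v := by
  simp [otherGraph]

/-- The colouring `c` has no rainbow triangle inside `X`. -/
def IsGallaiOn (c : Sym2 V → κ) (X : Set V) : Prop :=
  ∀ u ∈ X, ∀ v ∈ X, ∀ w ∈ X, u ≠ v → u ≠ w → v ≠ w →
    c s(u, v) = c s(u, w) ∨ c s(u, v) = c s(v, w) ∨ c s(u, w) = c s(v, w)

lemma IsGallaiOn.mono {X Y : Set V} (h : IsGallaiOn c Y) (hXY : X ⊆ Y) : IsGallaiOn c X :=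
  fun u hu v hv w hw => h u (hXY hu) v (hXY hv) w (hXY hw)

end Coloring

section SmallLevels

open scoped Classical

variable {V κ : Type*} {c : Sym2 V → κ} {K : Set κ} {X Y : Finset V} {i red blue : κ} {n : ℕ}
  {u v w : V}

lemma IsGallaiOn.on_neighborsIn {G : SimpleGraph V} (hG : IsGallaiOn c X) :
    IsGallaiOn c (neighborsIn G X v) :=
  hG.mono (coe_subset.2 neighborsIn_subset)

lemma IsGallaiOn.almostCliqueFreeOn_otherGraph (hG : IsGallaiOn c X)
    (h : ∀ i ∉ K, AlmostCliqueFreeOn (colorGraph c i) 1 X) :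
    AlmostCliqueFreeOn (otherGraph c K) 1 X := by
  refine fun v hv => card_le_one.2 fun a ha b hb => ?_
  simp only [mem_neighborsIn, otherGraph_adj] at ha hb
  obtain ⟨ha, haK, hva⟩ := ha
  obtain ⟨hb, hbK, hvb⟩ := hb
  by_contra hab
  rcases hG v hv a ha b hb hva hvb hab with e | e | e
  · exact hab ((h _ haK).eq_of_adj hv ha hb (by simp [hva]) (by simp [e, hvb]))
  · exact hvb ((h _ haK).eq_of_adj ha hv hb (by simp [Sym2.eq_swap, hva.symm]) (by simp [e, hab]))
  · exact hva ((h _ hbK).eq_of_adj hb hv ha (by simp [Sym2.eq_swap, hvb.symm])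
      (by simp [Sym2.eq_swap (a := b), e, Ne.symm hab]))

lemma IsGallaiOn.almostCliqueFreeOn_otherGraph_of_insert (hG : IsGallaiOn c X)
    (hK : AlmostCliqueFreeOn (otherGraph c (insert i K)) 1 X)
    (hi : AlmostCliqueFreeOn (colorGraph c i) 1 X) : AlmostCliqueFreeOn (otherGraph c K) 1 X := by
  refine hG.almostCliqueFreeOn_otherGraph fun j hj => ?_
  by_cases hji : j = i
  · exact hji ▸ hi
  · refine hK.anti fun u v huv => ?_
    obtain ⟨rfl, hne⟩ := colorGraph_adj.1 huv
    simp [hj, hji, hne]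

lemma IsGallaiOn.adj_of_otherGraph_adj (hG : IsGallaiOn c X)
    (hK : AlmostCliqueFreeOn (otherGraph c K) 1 X) (hi : i ∈ K) (hu : u ∈ X) (hv : v ∈ X)
    (hw : w ∈ X) (huv : (otherGraph c K).Adj u v) (huw : (colorGraph c i).Adj u w) :
    (colorGraph c i).Adj v w := by
  obtain ⟨huvK, huv'⟩ := otherGraph_adj.1 huv
  obtain ⟨rfl, huw'⟩ := colorGraph_adj.1 huw
  have hvw : v ≠ w := by
    rintro rfl
    exact huvK hi
  rcases hG u hu v hv w hw huv' huw' hvw with e | e | e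
  · exact absurd (e ▸ hi) huvK
  · exact absurd (hK.eq_of_adj hv hu hw huv.symm (by simp [← e, huvK, hvw])) huw'
  · exact colorGraph_adj.2 ⟨e.symm, hvw⟩

lemma card_le_two_mul_of_almostCliqueFreeOn (hG : IsGallaiOn c X)
    (hi : AlmostCliqueFreeOn (colorGraph c i) (n + 1) X)
    (hother : AlmostCliqueFreeOn (otherGraph c {i}) 1 X) : #X ≤ 2 * (n + 1) := by
  rcases X.eq_empty_or_nonempty with rfl | ⟨v, hv⟩
  · simp
  induction n generalizing X v with
  | zero =>
    have hall : AlmostCliqueFreeOn (otherGraph c ∅) 1 X :=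
      hG.almostCliqueFreeOn_otherGraph_of_insert (by simpa using hother) hi
    have hclique : (otherGraph c ∅ ⊔ ⊥).IsClique X := fun u _ w _ huw => by simp [huw]
    have hv1 : #(neighborsIn (otherGraph c ∅) X v) ≤ 1 := hall v hv
    have := card_le_one_add_card_neighborsIn hclique hv
    simp only [neighborsIn, bot_adj, filter_false, card_empty] at this hv1
    omega
  | succ n ih =>
    have hclique : (colorGraph c i ⊔ otherGraph c {i}).IsClique X :=
      fun u _ w _ huw => by simp [huw, em]
    have hother1 : #(neighborsIn (otherGraph c {i}) X v) ≤ 1 := hother v hv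
    have hnbr : #(neighborsIn (colorGraph c i) X v) ≤ 2 * (n + 1) := by
      rcases (neighborsIn (colorGraph c i) X v).eq_empty_or_nonempty with h | ⟨w, hw⟩
      · simp [h]
      · exact ih hG.on_neighborsIn (hi v hv) (hother.mono neighborsIn_subset) w hw
    have := card_le_one_add_card_neighborsIn hclique hv
    omega

lemma card_le_add_card_neighborsIn_otherGraph (hv : v ∈ X) :
    #X ≤ 1 + #(neighborsIn (colorGraph c red) X v) + #(neighborsIn (colorGraph c blue) X v) +
      #(neighborsIn (otherGraph c {red, blue}) X v) := by
  have hclique : ((colorGraph c red ⊔ colorGraph c blue) ⊔ otherGraph c {red, blue}).IsClique X :=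
    fun u _ w _ huw => by
      simp only [sup_adj, colorGraph_adj, otherGraph_adj, Set.mem_insert_iff,
        Set.mem_singleton_iff]
      tauto
  have := card_le_one_add_card_neighborsIn hclique hv
  have := card_neighborsIn_sup_le (G := colorGraph c red) (H := colorGraph c blue) X v
  omega

lemma card_neighborsIn_le_of_almostCliqueFreeOn (hG : IsGallaiOn c X)
    (hred : AlmostCliqueFreeOn (colorGraph c red) 2 X)
    (hblue : AlmostCliqueFreeOn (colorGraph c blue) (n + 1) X)
    (hother : AlmostCliqueFreeOn (otherGraph c {red, blue}) 1 X) (hv : v ∈ X) :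
    #(neighborsIn (colorGraph c red) X v) ≤ 2 * (n + 1) :=
  card_le_two_mul_of_almostCliqueFreeOn hG.on_neighborsIn (hblue.mono neighborsIn_subset)
    (hG.on_neighborsIn.almostCliqueFreeOn_otherGraph_of_insert (hother.mono neighborsIn_subset)
      (hred v hv))

lemma card_le_nine_add_of_almostCliqueFreeOn (hG : IsGallaiOn c X)
    (hred : AlmostCliqueFreeOn (colorGraph c red) 2 X)
    (hblue : AlmostCliqueFreeOn (colorGraph c blue) 2 X)
    (hother : AlmostCliqueFreeOn (otherGraph c {red, blue}) 1 X) (hv : v ∈ X) :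
    #X ≤ 9 + #(neighborsIn (otherGraph c {red, blue}) X v) := by
  have hr := card_neighborsIn_le_of_almostCliqueFreeOn hG hred hblue hother hv
  have hb := card_neighborsIn_le_of_almostCliqueFreeOn hG hblue hred
    (Set.pair_comm red blue ▸ hother) hv
  have := card_le_add_card_neighborsIn_otherGraph (c := c) (red := red) (blue := blue) hv
  omega

lemma card_le_ten_of_almostCliqueFreeOn (hG : IsGallaiOn c X)
    (hred : AlmostCliqueFreeOn (colorGraph c red) 2 X)
    (hblue : AlmostCliqueFreeOn (colorGraph c blue) 2 X)
    (hother : AlmostCliqueFreeOn (otherGraph c {red, blue}) 1 X) : #X ≤ 10 := by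
  rcases X.eq_empty_or_nonempty with rfl | ⟨v, hv⟩
  · simp
  have hv1 : #(neighborsIn (otherGraph c {red, blue}) X v) ≤ 1 := hother v hv
  have := card_le_nine_add_of_almostCliqueFreeOn hG hred hblue hother hv
  omega

/-- The isolated vertices of the graph induced by `G` on `X`. -/
noncomputable def isolatedIn (G : SimpleGraph V) (X : Finset V) : Finset V :=
  {v ∈ X | neighborsIn G X v = ∅}

lemma isolatedIn_subset {G : SimpleGraph V} : isolatedIn G X ⊆ X :=
  filter_subset _ _

lemma not_adj_of_mem_isolatedIn {G : SimpleGraph V} (hu : u ∈ isolatedIn G X) (hv : v ∈ X) :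
    ¬ G.Adj u v := fun huv =>
  notMem_empty v ((mem_filter.1 hu).2 ▸ mem_neighborsIn.2 ⟨hv, huv⟩)

lemma IsGallaiOn.not_isNClique_of_otherGraph_adj (hG : IsGallaiOn c X)
    (hK : AlmostCliqueFreeOn (otherGraph c K) 1 X) (hi : i ∈ K)
    (hfree : AlmostCliqueFreeOn (colorGraph c i) n X) {Q : Finset V} (hQ : Q ⊆ X) (hu : u ∈ Q)
    (hv : v ∈ X) (huv : (otherGraph c K).Adj u v) :
    ¬ (colorGraph c i).IsNClique (n + 1) Q := by
  intro hclique
  have hcomplete : (colorGraph c i).IsCompleteBetween ({u, v} : Finset V) (Q.erase u) := by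
    intro a ha b hb
    obtain ⟨hbu, hbQ⟩ := mem_erase.1 hb
    have hub := hclique.isClique hu hbQ hbu.symm
    rcases mem_insert.1 ha with rfl | ha
    · exact hub
    · rw [mem_singleton.1 ha]
      exact hG.adj_of_otherGraph_adj hK hi (hQ hu) hv (hQ hbQ) huv hub
  have hpair : AlmostCliqueFreeOn (colorGraph c i) 0 {u, v} :=
    AlmostCliqueFreeOn.of_isCompleteBetween (m := n) (by simpa using hfree)
      (insert_subset (hQ hu) (singleton_subset_iff.2 hv)) ((erase_subset u Q).trans hQ) hcomplete
      fun h => h subset_rfl (hclique.erase_of_mem hu)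
  exact huv.ne (card_le_one.1 hpair u (by simp) v (by simp))

/-- A clique of order `n + 1` has a vertex incident with a colour outside `K`; doubling that vertex
would give an almost-clique. -/
lemma IsGallaiOn.cliqueFreeOn_of_card_isolatedIn_le (hG : IsGallaiOn c X)
    (hK : AlmostCliqueFreeOn (otherGraph c K) 1 X) (hi : i ∈ K)
    (hfree : AlmostCliqueFreeOn (colorGraph c i) n X) (hY : Y ⊆ X)
    (hcard : #(Y ∩ isolatedIn (otherGraph c K) X) ≤ n) :
    (colorGraph c i).CliqueFreeOn Y (n + 1) := by
  intro Q hQY hQ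
  obtain ⟨u, huQ, hu⟩ : ∃ u ∈ Q, u ∉ isolatedIn (otherGraph c K) X := by
    by_contra! h
    have := card_le_card fun u hu => mem_inter.2 ⟨hQY hu, h u hu⟩
    have := hQ.card_eq
    omega
  have huX : u ∈ X := hY (hQY huQ)
  obtain ⟨v, hv⟩ : (neighborsIn (otherGraph c K) X u).Nonempty := by
    by_contra! h
    exact hu (mem_filter.2 ⟨huX, h⟩)
  obtain ⟨hvX, huv⟩ := mem_neighborsIn.1 hv
  exact hG.not_isNClique_of_otherGraph_adj hK hi hfree ((coe_subset.1 hQY).trans hY) huQ hvX huv hQ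

lemma exists_isIndepSet_of_almostCliqueFreeOn {G : SimpleGraph V} (h : AlmostCliqueFreeOn G 1 X) :
    ∃ R ⊆ X, G.IsIndepSet R ∧ #X ≤ 2 * #R := by
  induction X using Finset.strongInduction with
  | H X ih =>
    rcases X.eq_empty_or_nonempty with rfl | ⟨v, hv⟩
    · exact ⟨∅, by simp⟩
    obtain ⟨R, hRX, hR, hcard⟩ := ih (X.erase v \ neighborsIn G X v)
      ((sdiff_subset).trans_ssubset (erase_ssubset hv))
      (h.mono (sdiff_subset.trans (erase_subset v X)))
    have hRv {w} (hw : w ∈ R) : w ≠ v ∧ w ∈ X ∧ ¬ G.Adj v w := by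
      have := hRX hw
      simp only [mem_sdiff, mem_erase, mem_neighborsIn] at this
      tauto
    refine ⟨insert v R, insert_subset hv fun w hw => (hRv hw).2.1, ?_, ?_⟩
    · rw [coe_insert, IsIndepSet, Set.pairwise_insert]
      exact ⟨hR, fun w hw _ => ⟨(hRv hw).2.2, fun hwv => (hRv hw).2.2 hwv.symm⟩⟩
    · have hv1 : #(neighborsIn G X v) ≤ 1 := h v hv
      have := le_card_sdiff (neighborsIn G X v) (X.erase v)
      rw [card_erase_of_mem hv] at this
      rw [card_insert_of_notMem fun hvR => (hRv hvR).1 rfl]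
      omega

lemma isClique_isolatedIn_of_seventeen_le (hG : IsGallaiOn c X)
    (hred : AlmostCliqueFreeOn (colorGraph c red) 2 X)
    (hblue : AlmostCliqueFreeOn (colorGraph c blue) 3 X)
    (hother : AlmostCliqueFreeOn (otherGraph c {red, blue}) 1 X) (hX : 17 ≤ #X) :
    (colorGraph c red).IsClique (isolatedIn (otherGraph c {red, blue}) X) := by
  intro u hu v hv huv
  have huX := isolatedIn_subset hu
  have hvX := isolatedIn_subset hv
  by_contra hnred
  have hvblue : v ∈ neighborsIn (colorGraph c blue) X u := by
    have := not_adj_of_mem_isolatedIn hu hvX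
    simp only [otherGraph_adj, colorGraph_adj, mem_neighborsIn, Set.mem_insert_iff,
      Set.mem_singleton_iff] at this hnred ⊢
    tauto
  have hublue := card_le_nine_add_of_almostCliqueFreeOn hG.on_neighborsIn
    (hred.mono neighborsIn_subset) (hblue u huX) (hother.mono neighborsIn_subset) hvblue
  have hured := card_neighborsIn_le_of_almostCliqueFreeOn hG hred hblue hother huX
  have hu0 : neighborsIn (otherGraph c {red, blue}) X u = ∅ := (mem_filter.1 hu).2
  have hv0 : neighborsIn (otherGraph c {red, blue}) X v = ∅ := (mem_filter.1 hv).2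
  have hv0' : neighborsIn (otherGraph c {red, blue}) (neighborsIn (colorGraph c blue) X u) v = ∅ :=
    subset_empty.1 (hv0 ▸ neighborsIn_mono neighborsIn_subset)
  have := card_le_add_card_neighborsIn_otherGraph (c := c) (red := red) (blue := blue) huX
  rw [hv0', card_empty] at hublue
  rw [hu0, card_empty] at this
  omega

lemma card_union_le_eight_of_isIndepSet (hG : IsGallaiOn c X)
    (hred : AlmostCliqueFreeOn (colorGraph c red) 2 X)
    (hblue : AlmostCliqueFreeOn (colorGraph c blue) 3 X)
    (hother : AlmostCliqueFreeOn (otherGraph c {red, blue}) 1 X) (hY : Y ⊆ X)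
    (hindep : (otherGraph c {red, blue}).IsIndepSet Y)
    (hcard : #(Y ∩ isolatedIn (otherGraph c {red, blue}) X) ≤ 2) : #Y ≤ 8 := by
  refine card_le_eight_of_cliqueFreeOn (G := colorGraph c red) (H := colorGraph c blue) ?_
    (hG.cliqueFreeOn_of_card_isolatedIn_le hother (by simp) hred hY hcard)
    (hG.cliqueFreeOn_of_card_isolatedIn_le hother (by simp) hblue hY (hcard.trans (by simp)))
  intro u hu v hv huv
  have := hindep hu hv huv
  simp only [otherGraph_adj, Set.mem_insert_iff, Set.mem_singleton_iff, sup_adj,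
    colorGraph_adj] at this ⊢
  tauto

lemma card_le_sixteen_of_almostCliqueFreeOn (hG : IsGallaiOn c X)
    (hred : AlmostCliqueFreeOn (colorGraph c red) 2 X)
    (hblue : AlmostCliqueFreeOn (colorGraph c blue) 3 X)
    (hother : AlmostCliqueFreeOn (otherGraph c {red, blue}) 1 X) : #X ≤ 16 := by
  by_contra! hX
  set T := isolatedIn (otherGraph c {red, blue}) X with hT
  have hTcard : #T < 4 := by
    by_contra! h
    obtain ⟨Q, hQT, hQ⟩ := exists_subset_card_eq h
    exact hred.cliqueFreeOn (coe_subset.2 (hQT.trans isolatedIn_subset))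
      ⟨(isClique_isolatedIn_of_seventeen_le hG hred hblue hother hX).subset
        (coe_subset.2 hQT), hQ⟩
  have hTX : T ⊆ X := isolatedIn_subset
  obtain ⟨R, hRS, hR, hScard⟩ := exists_isIndepSet_of_almostCliqueFreeOn
    (hother.mono (sdiff_subset : X \ T ⊆ X))
  obtain ⟨T', hT'T, hT'card⟩ := exists_subset_card_eq (min_le_left #T 2)
  have hRX : R ⊆ X := hRS.trans sdiff_subset
  have hRT : Disjoint R T := disjoint_of_subset_left hRS sdiff_disjoint
  have hYX : R ∪ T' ⊆ X := union_subset hRX (hT'T.trans hTX)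
  have hindep : (otherGraph c {red, blue}).IsIndepSet ↑(R ∪ T') := by
    intro u hu v hv huv hadj
    rcases mem_union.1 hu with huR | huT
    · rcases mem_union.1 hv with hvR | hvT
      · exact hR huR hvR huv hadj
      · exact not_adj_of_mem_isolatedIn (hT'T hvT) (hYX hu) hadj.symm
    · exact not_adj_of_mem_isolatedIn (hT'T huT) (hYX hv) hadj
  have hYT : (R ∪ T') ∩ T = T' := by
    rw [union_inter_distrib_right, disjoint_iff_inter_eq_empty.1 hRT, empty_union,
      inter_eq_left.2 hT'T]
  have hYcard := card_union_le_eight_of_isIndepSet hG hred hblue hother hYX hindep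
    (by rw [← hT, hYT]; omega)
  rw [card_union_of_disjoint (disjoint_of_subset_right hT'T hRT)] at hYcard
  have := card_sdiff_add_card_eq_card hTX
  omega

lemma card_le_thirtyFour_of_almostCliqueFreeOn (hG : IsGallaiOn c X)
    (hred : AlmostCliqueFreeOn (colorGraph c red) 3 X)
    (hblue : AlmostCliqueFreeOn (colorGraph c blue) 3 X)
    (hother : AlmostCliqueFreeOn (otherGraph c {red, blue}) 1 X) : #X ≤ 34 := by
  rcases X.eq_empty_or_nonempty with rfl | ⟨v, hv⟩
  · simp
  have hr := card_le_sixteen_of_almostCliqueFreeOn hG.on_neighborsIn (hred v hv)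
    (hblue.mono neighborsIn_subset) (hother.mono neighborsIn_subset)
  have hb := card_le_sixteen_of_almostCliqueFreeOn hG.on_neighborsIn (hblue v hv)
    (hred.mono neighborsIn_subset) (Set.pair_comm red blue ▸ hother.mono neighborsIn_subset)
  have ho : #(neighborsIn (otherGraph c {red, blue}) X v) ≤ 1 := hother v hv
  have := card_le_add_card_neighborsIn_otherGraph (c := c) (red := red) (blue := blue) hv
  omega

end SmallLevels

section GallaiPartition

open scoped Classical

variable {V κ ι : Type*} {c : Sym2 V → κ} {X A : Finset V} {i j red blue : κ} {p : V → ι}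
  {u v x y z : V}

/-- The graph of the edges of colour `i` with both ends in `X`. -/
def colorGraphIn (c : Sym2 V → κ) (i : κ) (X : Finset V) : SimpleGraph V :=
  fromEdgeSet {e | c e = i ∧ ∀ v ∈ e, v ∈ X}

lemma colorGraphIn_adj :
    (colorGraphIn c i X).Adj u v ↔ c s(u, v) = i ∧ u ∈ X ∧ v ∈ X ∧ u ≠ v := by
  simp [colorGraphIn, and_assoc]

/-- The colour `i` spans a connected graph on the vertex set `X`. -/
def IsColorConnectedOn (c : Sym2 V → κ) (i : κ) (X : Finset V) : Prop :=
  ∀ x ∈ X, ∀ y ∈ X, (colorGraphIn c i X).Reachable x y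

/-- The colours of the edges with both ends in `X`. -/
noncomputable def usedColors (c : Sym2 V → κ) (X : Finset V) : Finset κ :=
  X.offDiag.image fun e => c s(e.1, e.2)

lemma mem_usedColors : i ∈ usedColors c X ↔ ∃ x ∈ X, ∃ y ∈ X, x ≠ y ∧ c s(x, y) = i := by
  simp only [usedColors, mem_image, mem_offDiag, Prod.exists]
  tauto

lemma usedColors_mono (hAX : A ⊆ X) : usedColors c A ⊆ usedColors c X :=
  image_subset_image (offDiag_mono hAX)

lemma mem_of_reachable (h : (colorGraphIn c i X).Reachable x y) (hx : x ∈ X) : y ∈ X := by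
  obtain ⟨q⟩ := h
  induction q with
  | nil => exact hx
  | cons hadj _ ih => exact ih (colorGraphIn_adj.1 hadj).2.2.1

lemma IsGallaiOn.color_eq_of_reachable (hG : IsGallaiOn c X)
    (h : (colorGraphIn c i X).Reachable x y) (hz : z ∈ X)
    (hxz : ¬ (colorGraphIn c i X).Reachable x z) : c s(x, z) = c s(y, z) := by
  obtain ⟨q⟩ := h
  induction q with
  | nil => rfl
  | @cons x u y hxu _ ih =>
    have huz : ¬ (colorGraphIn c i X).Reachable u z := fun huz => hxz (hxu.reachable.trans huz)
    rw [← ih huz]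
    obtain ⟨hcolor, hx, hu, hne⟩ := colorGraphIn_adj.1 hxu
    have hcolor_ne {a} (ha : a ∈ X) (haz : ¬ (colorGraphIn c i X).Reachable a z) :
        a ≠ z ∧ c s(a, z) ≠ i := by
      have hne : a ≠ z := by
        rintro rfl
        exact haz .rfl
      exact ⟨hne, fun h => haz (colorGraphIn_adj.2 ⟨h, ha, hz, hne⟩).reachable⟩
    obtain ⟨hxz', hx_ne⟩ := hcolor_ne hx hxz
    obtain ⟨huz', hu_ne⟩ := hcolor_ne hu huz
    rcases hG x hx u hu z hz hne hxz' huz' with e | e | e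
    · exact absurd (e.symm.trans hcolor) hx_ne
    · exact absurd (e.symm.trans hcolor) hu_ne
    · exact e

lemma IsColorConnectedOn.exists_color_eq (h : IsColorConnectedOn c i X) (hi : i ∈ usedColors c X)
    (hv : v ∈ X) : ∃ w ∈ X, w ≠ v ∧ c s(v, w) = i := by
  obtain ⟨a, ha, b, hb, hab, -⟩ := mem_usedColors.1 hi
  obtain ⟨w, hw, hwv⟩ := exists_mem_ne (one_lt_card.2 ⟨a, ha, b, hb, hab⟩) v
  obtain ⟨q⟩ := h v hv w hw
  cases q with
  | nil => exact absurd rfl hwv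
  | cons hadj _ =>
    obtain ⟨hcolor, -, hu, hne⟩ := colorGraphIn_adj.1 hadj
    exact ⟨_, hu, hne.symm, hcolor⟩

lemma mem_usedColors_erase (hi : i ∈ usedColors c X) (hj : j ∈ usedColors c X) (hij : i ≠ j)
    (hic : IsColorConnectedOn c i X) (hjc : IsColorConnectedOn c j X) (hv : v ∈ X) :
    i ∈ usedColors c (X.erase v) := by
  obtain ⟨x, hx, hxv, hvx⟩ := hjc.exists_color_eq hj hv
  obtain ⟨y, hy, hyx, hxy⟩ := hic.exists_color_eq hi hx
  have hyv : y ≠ v := by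
    rintro rfl
    exact hij (hxy.symm.trans (Sym2.eq_swap ▸ hvx))
  exact mem_usedColors.2 ⟨x, by simp [hx, hxv], y, by simp [hy, hyv], hyx.symm, hxy⟩

lemma exists_reachable_erase (h : (colorGraphIn c i X).Reachable y v) (hy : y ∈ X.erase v) :
    ∃ z ∈ X.erase v, (colorGraphIn c i (X.erase v)).Reachable y z ∧ c s(v, z) = i := by
  obtain ⟨q⟩ := h
  induction q with
  | nil => exact absurd rfl (ne_of_mem_erase hy)
  | @cons y b v hadj _ ih =>
    obtain ⟨hcolor, -, hb, hne⟩ := colorGraphIn_adj.1 hadj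
    by_cases hbv : b = v
    · exact ⟨y, hy, .rfl, by rw [Sym2.eq_swap, ← hbv, hcolor]⟩
    · have hb' : b ∈ X.erase v := mem_erase.2 ⟨hbv, hb⟩
      obtain ⟨z, hz, hbz, hvz⟩ := ih hb'
      have hyb : (colorGraphIn c i (X.erase v)).Adj y b :=
        colorGraphIn_adj.2 ⟨hcolor, hy, hb', hne⟩
      exact ⟨z, hz, hyb.reachable.trans hbz, hvz⟩

/-- In a component of colour `i` of `X \ {v}` avoiding `x` there is an `i`-neighbour `z` of `v`;
the triangle `v`, `x`, `z` determines the colour between `x` and that component. -/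
lemma IsGallaiOn.color_eq_of_not_reachable_erase (hG : IsGallaiOn c X)
    (hi : IsColorConnectedOn c i X) (hv : v ∈ X) (hx : x ∈ X.erase v) (hy : y ∈ X.erase v)
    (hvx : c s(v, x) ≠ i) (hxy : ¬ (colorGraphIn c i (X.erase v)).Reachable x y) :
    c s(x, y) = c s(v, x) := by
  have hG' : IsGallaiOn c (X.erase v) := hG.mono (coe_subset.2 (erase_subset v X))
  obtain ⟨z, hz, hyz, hvz⟩ := exists_reachable_erase (hi y (mem_of_mem_erase hy) v hv) hy
  have hxz : ¬ (colorGraphIn c i (X.erase v)).Reachable x z := fun h => hxy (h.trans hyz.symm)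
  have hne : x ≠ z := by
    rintro rfl
    exact hxz .rfl
  have hxz_ne : c s(x, z) ≠ i := fun h => hxz (colorGraphIn_adj.2 ⟨h, hx, hz, hne⟩).reachable
  have hxy_eq : c s(x, y) = c s(x, z) := by
    have := hG'.color_eq_of_reachable hyz hx fun h => hxy h.symm
    rwa [Sym2.eq_swap, Sym2.eq_swap (a := z)] at this
  rw [hxy_eq]
  rcases hG v hv x (mem_of_mem_erase hx) z (mem_of_mem_erase hz) (ne_of_mem_erase hx).symm
    (ne_of_mem_erase hz).symm hne with e | e | e
  · exact absurd (e.trans hvz) hvx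
  · exact e.symm
  · exact absurd (e.symm.trans hvz) hxz_ne

lemma IsGallaiOn.isColorConnectedOn_erase (hG : IsGallaiOn c X) (hi : IsColorConnectedOn c i X)
    (hv : v ∈ X) (hx : x ∈ X.erase v) (hy : y ∈ X.erase v) (hvx : c s(v, x) ≠ i)
    (hvy : c s(v, y) ≠ i) (hne : c s(v, x) ≠ c s(v, y)) : IsColorConnectedOn c i (X.erase v) := by
  have hG' : IsGallaiOn c (X.erase v) := hG.mono (coe_subset.2 (erase_subset v X))
  have hxy : (colorGraphIn c i (X.erase v)).Reachable x y := by
    by_contra h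
    have e := hG.color_eq_of_not_reachable_erase hi hv hx hy hvx h
    have e' := hG.color_eq_of_not_reachable_erase hi hv hy hx hvy fun h' => h h'.symm
    exact hne (e.symm.trans (Sym2.eq_swap ▸ e'))
  have hall {w} (hw : w ∈ X.erase v) : (colorGraphIn c i (X.erase v)).Reachable x w := by
    by_contra h
    have e := hG.color_eq_of_not_reachable_erase hi hv hx hw hvx h
    have e' := hG.color_eq_of_not_reachable_erase hi hv hy hw hvy fun h' => h (hxy.trans h')
    exact hne (e.symm.trans ((hG'.color_eq_of_reachable hxy hw h).trans e'))
  exact fun a ha b hb => (hall ha).symm.trans (hall hb)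

/-- The key step in the proof of Gallai's theorem, by deleting a vertex `v`: if one of the colours
becomes disconnected on `X \ {v}`, then `v` sends two further colours to `X \ {v}`, against
`isColorConnectedOn_erase`. -/
lemma IsGallaiOn.exists_not_isColorConnectedOn (hG : IsGallaiOn c X)
    (hcard : 2 < #(usedColors c X)) : ∃ i ∈ usedColors c X, ¬ IsColorConnectedOn c i X := by
  induction X using Finset.strongInduction with
  | H X ih =>
    by_contra! hconn
    obtain ⟨i, hi⟩ := card_pos.1 (by omega : 0 < #(usedColors c X))
    obtain ⟨v, hv, -⟩ := mem_usedColors.1 hi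
    have hused : usedColors c X ⊆ usedColors c (X.erase v) := fun i hi => by
      obtain ⟨j, hj, hji⟩ := exists_mem_ne (by omega : 1 < #(usedColors c X)) i
      exact mem_usedColors_erase hi hj hji.symm (hconn i hi) (hconn j hj) hv
    obtain ⟨m, hm, hm_not⟩ := ih (X.erase v) (erase_ssubset hv)
      (hG.mono (coe_subset.2 (erase_subset v X))) (hcard.trans_le (card_le_card hused))
    have hmX : m ∈ usedColors c X := usedColors_mono (erase_subset v X) hm
    obtain ⟨j, hj, l, hl, hjl⟩ :=
      one_lt_card.1 (by rw [card_erase_of_mem hmX]; omega : 1 < #((usedColors c X).erase m))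
    obtain ⟨hjm, hj⟩ := mem_erase.1 hj
    obtain ⟨hlm, hl⟩ := mem_erase.1 hl
    obtain ⟨x, hx, hxv, rfl⟩ := (hconn j hj).exists_color_eq hj hv
    obtain ⟨y, hy, hyv, rfl⟩ := (hconn l hl).exists_color_eq hl hv
    exact hm_not (hG.isColorConnectedOn_erase (hconn m hmX) hv (mem_erase.2 ⟨hxv, hx⟩)
      (mem_erase.2 ⟨hyv, hy⟩) hjm hlm hjl)

/-- The set `X` splits into two nonempty parts joined completely by a single colour. -/
def IsMonoSplit (c : Sym2 V → κ) (X : Finset V) : Prop :=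
  ∃ (i : κ) (A B : Finset V), A.Nonempty ∧ B.Nonempty ∧ A ∪ B = X ∧
    (colorGraph c i).IsCompleteBetween A B

/-- A Gallai partition of `X` into the fibres of `p`: the edges between distinct fibres are red or
blue, their colour depends only on the two fibres, and every vertex sends edges of both colours to
other fibres. -/
structure IsGallaiPartition (c : Sym2 V → κ) (X : Finset V) (red blue : κ) (p : V → ι) : Prop where
  ne : red ≠ blue
  color_eq : ∀ x ∈ X, ∀ y ∈ X, p x ≠ p y → c s(x, y) = red ∨ c s(x, y) = blue
  homogeneous : ∀ x ∈ X, ∀ x' ∈ X, ∀ y ∈ X, p x = p x' → p x ≠ p y → c s(x, y) = c s(x', y)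
  exists_red : ∀ x ∈ X, ∃ y ∈ X, p x ≠ p y ∧ c s(x, y) = red
  exists_blue : ∀ x ∈ X, ∃ y ∈ X, p x ≠ p y ∧ c s(x, y) = blue

lemma IsGallaiPartition.swap (h : IsGallaiPartition c X red blue p) :
    IsGallaiPartition c X blue red p :=
  ⟨h.ne.symm, fun x hx y hy hxy => (h.color_eq x hx y hy hxy).symm, h.homogeneous, h.exists_blue,
    h.exists_red⟩

/-- Contracting the connected components of a disconnected colour. -/
lemma IsGallaiOn.exists_contraction (hG : IsGallaiOn c X) (hi : i ∈ usedColors c X)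
    (hconn : ¬ IsColorConnectedOn c i X) :
    ∃ rep : V → V, X.image rep ⊂ X ∧ 2 ≤ #(X.image rep) ∧
      ∀ x ∈ X, ∀ y ∈ X, rep x ≠ rep y → c s(x, y) = c s(rep x, rep y) := by
  let rep (x : V) : V := ((colorGraphIn c i X).connectedComponentMk x).out
  have hrep (x : V) : (colorGraphIn c i X).Reachable x (rep x) :=
    (ConnectedComponent.exact (Quot.out_eq _)).symm
  have hrep_eq {x y} : rep x = rep y ↔ (colorGraphIn c i X).Reachable x y :=
    ⟨fun h => (hrep x).trans (h ▸ (hrep y).symm),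
      fun h => congrArg Quot.out (ConnectedComponent.sound h)⟩
  have hrep_mem {x} (hx : x ∈ X) : rep x ∈ X := mem_of_reachable (hrep x) hx
  obtain ⟨a, ha, b, hb, hab, hcolor⟩ := mem_usedColors.1 hi
  have hab_adj : (colorGraphIn c i X).Adj a b := colorGraphIn_adj.2 ⟨hcolor, ha, hb, hab⟩
  simp only [IsColorConnectedOn, not_forall] at hconn
  obtain ⟨x₀, hx₀, y₀, hy₀, hxy₀⟩ := hconn
  have hsub : X.image rep ⊆ X := image_subset_iff.2 fun x hx => hrep_mem hx
  refine ⟨rep, hsub.ssubset_of_ne fun h => hab ?_, ?_, fun x hx y hy hne => ?_⟩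
  · exact card_image_iff.1 (congrArg card h) ha hb (hrep_eq.2 hab_adj.reachable)
  · exact one_lt_card.2 ⟨rep x₀, mem_image_of_mem _ hx₀, rep y₀, mem_image_of_mem _ hy₀,
      fun h => hxy₀ (hrep_eq.1 h)⟩
  · have hxy : ¬ (colorGraphIn c i X).Reachable x y := fun h => hne (hrep_eq.2 h)
    rw [hG.color_eq_of_reachable (hrep x) hy hxy, Sym2.eq_swap,
      hG.color_eq_of_reachable (hrep y) (hrep_mem hx)
        fun h => hxy ((hrep x).trans h.symm), Sym2.eq_swap]

lemma IsMonoSplit.of_contraction {rep : V → V} (h : IsMonoSplit c (X.image rep))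
    (hrep : ∀ x ∈ X, ∀ y ∈ X, rep x ≠ rep y → c s(x, y) = c s(rep x, rep y)) :
    IsMonoSplit c X := by
  obtain ⟨i, A, B, hA, hB, hAB, hcomplete⟩ := h
  have hfiber {A : Finset V} (hA : A.Nonempty) (hAX : A ⊆ X.image rep) :
      ({x ∈ X | rep x ∈ A} : Finset V).Nonempty := by
    obtain ⟨a, ha⟩ := hA
    obtain ⟨x, hx, rfl⟩ := mem_image.1 (hAX ha)
    exact ⟨x, by simp [hx, ha]⟩
  refine ⟨i, {x ∈ X | rep x ∈ A}, {x ∈ X | rep x ∈ B}, hfiber hA (hAB ▸ subset_union_left),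
    hfiber hB (hAB ▸ subset_union_right), ?_, ?_⟩
  · rw [← filter_or, filter_true_of_mem fun x hx => mem_union.1 (hAB ▸ mem_image_of_mem rep hx)]
  · intro x hx y hy
    simp only [coe_filter, Set.mem_ofPred_eq] at hx hy
    have hadj := colorGraph_adj.1 (hcomplete hx.2 hy.2)
    exact colorGraph_adj.2 ⟨(hrep x hx.1 y hy.1 hadj.2).trans hadj.1, ne_of_apply_ne rep hadj.2⟩

lemma IsGallaiPartition.of_contraction {rep : V → V} {p : V → ι}
    (h : IsGallaiPartition c (X.image rep) red blue p)
    (hrep : ∀ x ∈ X, ∀ y ∈ X, rep x ≠ rep y → c s(x, y) = c s(rep x, rep y)) :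
    IsGallaiPartition c X red blue (p ∘ rep) := by
  have hmem {x} (hx : x ∈ X) : rep x ∈ X.image rep := mem_image_of_mem rep hx
  have hcolor {x y} (hx : x ∈ X) (hy : y ∈ X) (hxy : p (rep x) ≠ p (rep y)) :
      c s(x, y) = c s(rep x, rep y) := hrep x hx y hy (ne_of_apply_ne p hxy)
  have hexists {i : κ}
      (h : ∀ x ∈ X.image rep, ∃ y ∈ X.image rep, p x ≠ p y ∧ c s(x, y) = i) :
      ∀ x ∈ X, ∃ y ∈ X, p (rep x) ≠ p (rep y) ∧ c s(x, y) = i := fun x hx => by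
    obtain ⟨z, hz, hne, hi⟩ := h _ (hmem hx)
    obtain ⟨y, hy, rfl⟩ := mem_image.1 hz
    exact ⟨y, hy, hne, (hcolor hx hy hne).trans hi⟩
  refine ⟨h.ne, fun x hx y hy hxy => ?_, fun x hx x' hx' y hy hxx' hxy => ?_,
    hexists h.exists_red, hexists h.exists_blue⟩
  · exact hcolor hx hy hxy ▸ h.color_eq _ (hmem hx) _ (hmem hy) hxy
  · rw [hcolor hx hy hxy, hcolor hx' hy fun e => hxy (hxx'.trans e)]
    exact h.homogeneous _ (hmem hx) _ (hmem hx') _ (hmem hy) hxx' hxy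

lemma exists_color_ne_of_not_isMonoSplit (h : ¬ IsMonoSplit c X) (hX : 2 ≤ #X) (hx : x ∈ X)
    (i : κ) : ∃ y ∈ X, x ≠ y ∧ c s(x, y) ≠ i := by
  by_contra! hall
  refine h ⟨i, {x}, X.erase x, singleton_nonempty x,
    card_pos.1 (by rw [card_erase_of_mem hx]; omega), ?_, ?_⟩
  · rw [← insert_eq, insert_erase hx]
  · intro a ha y hy
    obtain rfl : a = x := by simpa using ha
    obtain ⟨hya, hy⟩ := mem_erase.1 hy
    exact colorGraph_adj.2 ⟨hall y hy hya.symm, hya.symm⟩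

lemma exists_isGallaiPartition_of_card_usedColors_le (h : ¬ IsMonoSplit c X) (hX : 2 ≤ #X)
    (hcard : #(usedColors c X) ≤ 2) : ∃ red blue, IsGallaiPartition c X red blue id := by
  have hne {x} (hx : x ∈ X) (i : κ) := exists_color_ne_of_not_isMonoSplit h hX hx i
  obtain ⟨x, hx⟩ := card_pos.1 (by omega : 0 < #X)
  obtain ⟨y, hy, hxy, -⟩ := hne hx (c s(x, x))
  obtain ⟨z, hz, hxz, hcolor⟩ := hne hx (c s(x, y))
  have hsub : ({c s(x, y), c s(x, z)} : Finset κ) ⊆ usedColors c X :=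
    insert_subset (mem_usedColors.2 ⟨x, hx, y, hy, hxy, rfl⟩)
      (singleton_subset_iff.2 (mem_usedColors.2 ⟨x, hx, z, hz, hxz, rfl⟩))
  have hused := eq_of_subset_of_card_le hsub (by rwa [card_pair hcolor.symm])
  have htwo {a b} (ha : a ∈ X) (hb : b ∈ X) (hab : a ≠ b) :
      c s(a, b) = c s(x, y) ∨ c s(a, b) = c s(x, z) := by
    have hab_used : c s(a, b) ∈ usedColors c X := mem_usedColors.2 ⟨a, ha, b, hb, hab, rfl⟩
    simpa only [← hused, mem_insert, mem_singleton] using hab_used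
  refine ⟨c s(x, y), c s(x, z), hcolor.symm, fun a ha b hb hab => htwo ha hb hab,
    fun a _ a' _ b _ haa' _ => by rw [show a = a' from haa'], fun a ha => ?_, fun a ha => ?_⟩
  · obtain ⟨b, hb, hab, hcb⟩ := hne ha (c s(x, z))
    exact ⟨b, hb, hab, (htwo ha hb hab).resolve_right hcb⟩
  · obtain ⟨b, hb, hab, hcb⟩ := hne ha (c s(x, y))
    exact ⟨b, hb, hab, (htwo ha hb hab).resolve_left hcb⟩

theorem IsGallaiOn.isMonoSplit_or_exists_isGallaiPartition (hG : IsGallaiOn c X) (hX : 2 ≤ #X) :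
    IsMonoSplit c X ∨ ∃ red blue, ∃ p : V → V, IsGallaiPartition c X red blue p := by
  induction X using Finset.strongInduction with
  | H X ih =>
    by_cases hcard : 2 < #(usedColors c X)
    · obtain ⟨i, hi, hconn⟩ := hG.exists_not_isColorConnectedOn hcard
      obtain ⟨rep, hssub, h2, hrep⟩ := hG.exists_contraction hi hconn
      rcases ih _ hssub (hG.mono (coe_subset.2 hssub.subset)) h2 with h | ⟨red, blue, p, h⟩
      · exact Or.inl (h.of_contraction hrep)
      · exact Or.inr ⟨red, blue, _, h.of_contraction hrep⟩
    · rw [or_iff_not_imp_left]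
      intro h
      obtain ⟨red, blue, hp⟩ :=
        exists_isGallaiPartition_of_card_usedColors_le h hX (not_lt.1 hcard)
      exact ⟨red, blue, id, hp⟩

end GallaiPartition

section Parts

open scoped Classical

variable {V κ ι : Type*} {c : Sym2 V → κ} {G : SimpleGraph V} {X Y A B : Finset V}
  {i red blue : κ} {p : V → ι} {m w w' : ℕ} {x y : V}

/-- The part of `x` when `X` is partitioned into the fibres of `p`. -/
noncomputable def part (p : V → ι) (X : Finset V) (x : V) : Finset V :=
  {y ∈ X | p y = p x}

lemma mem_part : y ∈ part p X x ↔ y ∈ X ∧ p y = p x := by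
  simp [part]

lemma part_subset : part p X x ⊆ X :=
  filter_subset _ _

lemma part_mono (hXY : X ⊆ Y) : part p X x ⊆ part p Y x :=
  filter_subset_filter _ hXY

/-- The vertices of `X` outside the part of `x` whose edge to `x` has colour `i`. -/
noncomputable def outerNeighbors (c : Sym2 V → κ) (p : V → ι) (i : κ) (X : Finset V) (x : V) :
    Finset V :=
  {y ∈ X | p y ≠ p x ∧ c s(x, y) = i}

lemma mem_outerNeighbors : y ∈ outerNeighbors c p i X x ↔ y ∈ X ∧ p y ≠ p x ∧ c s(x, y) = i := by
  simp [outerNeighbors]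

lemma outerNeighbors_subset : outerNeighbors c p i X x ⊆ X :=
  filter_subset _ _

lemma outerNeighbors_ssubset (hx : x ∈ X) : outerNeighbors c p i X x ⊂ X :=
  filter_ssubset.2 ⟨x, hx, by simp⟩

lemma outerNeighbors_subset_neighborsIn :
    outerNeighbors c p i X x ⊆ neighborsIn (colorGraph c i) X x := fun y hy => by
  obtain ⟨hyX, hne, hcolor⟩ := mem_outerNeighbors.1 hy
  exact mem_neighborsIn.2 ⟨hyX, colorGraph_adj.2 ⟨hcolor, ne_of_apply_ne p hne.symm⟩⟩

lemma isCompleteBetween_part_filter (hjoin : ∀ x ∈ Y, ∀ y ∈ Y, p x ≠ p y → G.Adj x y) :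
    G.IsCompleteBetween (part p Y x) ({y ∈ Y | ¬ p y = p x} : Finset V) := fun a ha b hb => by
  obtain ⟨haY, hax⟩ := mem_part.1 ha
  obtain ⟨hbY, hbx⟩ := mem_filter.1 hb
  exact hjoin a haY b hbY fun h => hbx (h.symm.trans hax)

lemma card_le_two_mul_of_parts_joined (hjoin : ∀ x ∈ Y, ∀ y ∈ Y, p x ≠ p y → G.Adj x y)
    (hpart : ∀ x ∈ Y, AlmostCliqueFreeOn G 1 (part p Y x)) (hY : AlmostCliqueFreeOn G 2 Y)
    (hw : ∀ Z ⊆ Y, AlmostCliqueFreeOn G 1 Z → #Z ≤ w) : #Y ≤ 2 * w := by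
  rcases Y.eq_empty_or_nonempty with rfl | ⟨x, hx⟩
  · simp
  have hrest : AlmostCliqueFreeOn G 1 {y ∈ Y | ¬ p y = p x} :=
    hY.of_isCompleteBetween_nonempty (filter_subset _ _) part_subset
      (isCompleteBetween_part_filter hjoin).symm ⟨x, mem_part.2 ⟨hx, rfl⟩⟩
  have hpart_le := hw _ part_subset (hpart x hx)
  have hrest_le := hw _ (filter_subset _ _) hrest
  have hcard := card_filter_add_card_filter_not (s := Y) fun y => p y = p x
  rw [part] at hpart_le
  omega

/-- An almost-clique of a join is the join of a clique on one side and an almost-clique on the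
other. -/
lemma AlmostCliqueFreeOn.join (h : AlmostCliqueFreeOn G 3 X) (hA : A ⊆ X) (hB : B ⊆ X)
    (hAB : G.IsCompleteBetween A B) (hAne : A.Nonempty) (hBne : B.Nonempty) :
    AlmostCliqueFreeOn G 2 A ∧ AlmostCliqueFreeOn G 1 B ∨
      AlmostCliqueFreeOn G 1 A ∧ AlmostCliqueFreeOn G 2 B := by
  have hA2 : AlmostCliqueFreeOn G 2 A := h.of_isCompleteBetween_nonempty hA hB hAB hBne
  have hB2 : AlmostCliqueFreeOn G 2 B := h.of_isCompleteBetween_nonempty hB hA hAB.symm hAne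
  by_cases hBfree : G.CliqueFreeOn B 2
  · exact .inl ⟨hA2, almostCliqueFreeOn_of_cliqueFreeOn hBfree⟩
  · exact .inr ⟨h.of_isCompleteBetween hA hB hAB hBfree, hB2⟩

lemma card_le_add_of_parts_joined (hjoin : ∀ x ∈ Y, ∀ y ∈ Y, p x ≠ p y → G.Adj x y)
    (hpart : ∀ x ∈ Y, AlmostCliqueFreeOn G 2 (part p Y x)) (hY : AlmostCliqueFreeOn G 3 Y)
    (hw : ∀ Z ⊆ Y, AlmostCliqueFreeOn G 1 Z → #Z ≤ w)
    (hw' : ∀ Z ⊆ Y, AlmostCliqueFreeOn G 2 Z → #Z ≤ w') : #Y ≤ w + w' := by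
  rcases Y.eq_empty_or_nonempty with rfl | ⟨x, hx⟩
  · simp
  have hcard := card_filter_add_card_filter_not (s := Y) fun y => p y = p x
  rw [← part] at hcard
  have hrest_sub : ({y ∈ Y | ¬ p y = p x} : Finset V) ⊆ Y := filter_subset _ _
  rcases ({y ∈ Y | ¬ p y = p x} : Finset V).eq_empty_or_nonempty with hempty | hne
  · rw [hempty, card_empty] at hcard
    have := hw' _ part_subset (hpart x hx)
    omega
  · rcases hY.join part_subset hrest_sub (isCompleteBetween_part_filter hjoin)
      ⟨x, mem_part.2 ⟨hx, rfl⟩⟩ hne with ⟨h2, h1⟩ | ⟨h1, h2⟩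
    · have := hw' _ part_subset h2
      have := hw _ hrest_sub h1
      omega
    · have := hw _ part_subset h1
      have := hw' _ hrest_sub h2
      omega

lemma exists_card_part_le_two (p : V → ι) (X : Finset V) :
    ∃ T ⊆ X, ∀ x, #(part p T x) = min #(part p X x) 2 := by
  have hchoose (q : ι) : ∃ S ⊆ ({y ∈ X | p y = q} : Finset V),
      #S = min #({y ∈ X | p y = q} : Finset V) 2 := exists_subset_card_eq (min_le_left _ _)
  choose S hS hcard using hchoose
  refine ⟨{y ∈ X | y ∈ S (p y)}, filter_subset _ _, fun x => ?_⟩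
  rw [part, part, ← hcard (p x), filter_filter]
  congr 1
  ext y
  constructor
  · intro hy
    obtain ⟨-, hyS, hyx⟩ := mem_filter.1 hy
    exact hyx ▸ hyS
  · intro hy
    obtain ⟨hyX, hyx⟩ := mem_filter.1 (hS _ hy)
    exact mem_filter.2 ⟨hyX, hyx.symm ▸ hy, hyx⟩

lemma card_le_mul_of_card_part_le (hw : 2 ≤ w) (hpart : ∀ x ∈ X, #(part p X x) ≤ w)
    (hT : ∀ T ⊆ X, (∀ x, #(part p T x) ≤ 2) → #T ≤ 2 * m) : #X ≤ w * m := by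
  obtain ⟨T, hTX, hTpart⟩ := exists_card_part_le_two p X
  have hT_le := hT T hTX fun x => (hTpart x).trans_le (min_le_right _ _)
  have hweight : 2 * #X ≤ w * #T := by
    rw [card_eq_sum_card_fiberwise (f := p) (t := X.image p) (s := X)
        fun x hx => mem_image_of_mem p hx,
      card_eq_sum_card_fiberwise (f := p) (t := X.image p) (s := T)
        fun x hx => mem_image_of_mem p (hTX hx), mul_sum, mul_sum]
    refine sum_le_sum fun q hq => ?_
    obtain ⟨x, hx, rfl⟩ := mem_image.1 hq
    change 2 * #(part p X x) ≤ w * #(part p T x)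
    rw [hTpart]
    rcases le_total #(part p X x) 2 with h | h
    · rw [min_eq_left h]
      exact Nat.mul_le_mul_right _ hw
    · rw [min_eq_right h, mul_comm]
      exact Nat.mul_le_mul_right _ (hpart x hx)
  nlinarith [Nat.mul_le_mul_left w hT_le]

/-- The colouring that keeps the colours between the fibres of `p` and gives all the edges inside
the fibres one new colour `none`. -/
noncomputable def crossColoring (c : Sym2 V → κ) (p : V → ι) (e : Sym2 V) : Option κ :=
  if (e.map p).IsDiag then none else some (c e)

lemma crossColoring_mk :
    crossColoring c p s(x, y) = if p x = p y then none else some (c s(x, y)) := by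
  simp [crossColoring]

lemma colorGraph_crossColoring_le : colorGraph (crossColoring c p) (some i) ≤ colorGraph c i := by
  intro u v huv
  obtain ⟨hcolor, hne⟩ := colorGraph_adj.1 huv
  rw [crossColoring_mk] at hcolor
  split_ifs at hcolor
  exact colorGraph_adj.2 ⟨Option.some.inj hcolor, hne⟩

lemma IsGallaiPartition.isGallaiOn_crossColoring (h : IsGallaiPartition c X red blue p)
    (hG : IsGallaiOn c X) : IsGallaiOn (crossColoring c p) X := by
  intro u hu v hv w hw huv huw hvw
  simp only [crossColoring_mk]
  by_cases huv' : p u = p v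
  · by_cases huw' : p u = p w
    · simp [huw', ← huv']
    · have := h.homogeneous u hu v hv w hw huv' huw'
      simp [← huv', huw', this]
  · by_cases huw' : p u = p w
    · have := h.homogeneous u hu w hw v hv huw' huv'
      rw [Sym2.eq_swap (a := w)] at this
      simp [huv', ← huw', this, Ne.symm huv']
    · by_cases hvw' : p v = p w
      · have := h.homogeneous v hv w hw u hu hvw' (Ne.symm huv')
        rw [Sym2.eq_swap, Sym2.eq_swap (a := w)] at this
        simp [huw', hvw', this]
      · simpa [huv', huw', hvw'] using hG u hu v hv w hw huv huw hvw

lemma IsGallaiPartition.almostCliqueFreeOn_otherGraph_crossColoring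
    (h : IsGallaiPartition c X red blue p) (hYX : Y ⊆ X) (hY : ∀ x, #(part p Y x) ≤ 2) :
    AlmostCliqueFreeOn (otherGraph (crossColoring c p) {some red, some blue}) 1 Y := by
  intro v hv
  have hsub : neighborsIn (otherGraph (crossColoring c p) {some red, some blue}) Y v ⊆
      (part p Y v).erase v := fun w hw => by
    obtain ⟨hwY, hadj⟩ := mem_neighborsIn.1 hw
    obtain ⟨hcolor, hne⟩ := otherGraph_adj.1 hadj
    refine mem_erase.2 ⟨hne.symm, mem_part.2 ⟨hwY, ?_⟩⟩
    by_contra hvw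
    have := h.color_eq v (hYX hv) w (hYX hwY) (Ne.symm hvw)
    rw [crossColoring_mk, if_neg (Ne.symm hvw)] at hcolor
    simp [this] at hcolor
  have hcard := card_le_card hsub
  rw [card_erase_of_mem (mem_part.2 ⟨hv, rfl⟩)] at hcard
  exact hcard.trans (Nat.sub_le_sub_right (hY v) 1)

end Parts

section PartitionBounds

open scoped Classical

variable {V κ ι : Type*} {c : Sym2 V → κ} {X Y N : Finset V} {i red blue : κ} {p : V → ι}
  {n w₀ w₁ w₂ w₃ : ℕ} {x : V}

lemma almostCliqueFreeOn_outerNeighbors (h : AlmostCliqueFreeOn (colorGraph c i) (n + 1) Y)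
    (hx : x ∈ Y) :
    AlmostCliqueFreeOn (colorGraph c i) n (outerNeighbors c p i Y x) :=
  (h x hx).mono outerNeighbors_subset_neighborsIn

namespace IsGallaiPartition

lemma isCompleteBetween (h : IsGallaiPartition c X red blue p) (hYX : Y ⊆ X) (hx : x ∈ Y) :
    (colorGraph c i).IsCompleteBetween (part p Y x) (outerNeighbors c p i Y x) := by
  intro a ha b hb
  obtain ⟨haY, hax⟩ := mem_part.1 ha
  obtain ⟨hbY, hbx, hcolor⟩ := mem_outerNeighbors.1 hb
  have hab : p a ≠ p b := fun e => hbx (e.symm.trans hax)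
  exact colorGraph_adj.2 ⟨(h.homogeneous a (hYX haY) x (hYX hx) b (hYX hbY) hax hab).trans hcolor,
    ne_of_apply_ne p hab⟩

lemma card_le (h : IsGallaiPartition c X red blue p) (hYX : Y ⊆ X) (hx : x ∈ Y) :
    #Y ≤ #(part p Y x) + #(outerNeighbors c p red Y x) + #(outerNeighbors c p blue Y x) := by
  have hcover : Y ⊆ part p Y x ∪ outerNeighbors c p red Y x ∪ outerNeighbors c p blue Y x := by
    intro y hy
    have := h.color_eq x (hYX hx) y (hYX hy)
    simp only [mem_union, mem_part, mem_outerNeighbors]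
    grind
  refine (card_le_card hcover).trans ((card_union_le _ _).trans ?_)
  exact Nat.add_le_add_right (card_union_le _ _) _

lemma part_ssubset (h : IsGallaiPartition c X red blue p) (hx : x ∈ X) : part p X x ⊂ X := by
  obtain ⟨y, hy, hne, -⟩ := h.exists_red x hx
  exact filter_ssubset.2 ⟨y, hy, hne.symm⟩

lemma almostCliqueFreeOn_part (h : IsGallaiPartition c X red blue p)
    (hred : AlmostCliqueFreeOn (colorGraph c red) (n + 1) X) (hYX : Y ⊆ X) (hx : x ∈ Y) :
    AlmostCliqueFreeOn (colorGraph c red) n (part p Y x) := by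
  obtain ⟨y, hy, hne, hcolor⟩ := h.exists_red x (hYX hx)
  exact (hred.of_isCompleteBetween_nonempty part_subset outerNeighbors_subset
    (h.isCompleteBetween subset_rfl (hYX hx)) ⟨y, mem_outerNeighbors.2 ⟨hy, hne.symm, hcolor⟩⟩).mono
    (part_mono hYX)

/-- A large part forces a small neighbourhood: the join of the two contains no almost-clique. -/
lemma cliqueFreeOn_outerNeighbors {m : ℕ} (h : IsGallaiPartition c X red blue p)
    (hi : AlmostCliqueFreeOn (colorGraph c i) (n + m) Y) (hYX : Y ⊆ X) (hx : x ∈ Y)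
    (hpart : ¬ AlmostCliqueFreeOn (colorGraph c i) n (part p Y x)) :
    (colorGraph c i).CliqueFreeOn (outerNeighbors c p i Y x) m := by
  by_contra hclique
  exact hpart (hi.of_isCompleteBetween part_subset outerNeighbors_subset
    (h.isCompleteBetween hYX hx) hclique)

lemma adj_of_cliqueFreeOn_two (h : IsGallaiPartition c X red blue p) (hYX : Y ⊆ X)
    (hY : (colorGraph c red).CliqueFreeOn Y 2) :
    ∀ x ∈ Y, ∀ y ∈ Y, p x ≠ p y → (colorGraph c blue).Adj x y := by
  intro x hx y hy hxy
  have hne : x ≠ y := ne_of_apply_ne p hxy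
  refine colorGraph_adj.2 ⟨(h.color_eq x (hYX hx) y (hYX hy) hxy).resolve_left fun hred => ?_, hne⟩
  exact (cliqueFreeOn_two _).1 hY hx hy hne (colorGraph_adj.2 ⟨hred, hne⟩)

end IsGallaiPartition

/-- Every proper subset of `X` on which red has level `a` and blue has level `b` has at most `w`
elements. This is the form in which the induction hypothesis on `X` is used. -/
def ProperSubsetBound (c : Sym2 V → κ) (X : Finset V) (red blue : κ) (a b w : ℕ) : Prop :=
  ∀ Y ⊂ X, AlmostCliqueFreeOn (colorGraph c red) a Y → AlmostCliqueFreeOn (colorGraph c blue) b Y →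
    #Y ≤ w

lemma ProperSubsetBound.swap {a b w : ℕ} (h : ProperSubsetBound c X red blue a b w) :
    ProperSubsetBound c X blue red b a w :=
  fun Y hY hblue hred => h Y hY hred hblue

lemma ProperSubsetBound.of_cliqueFreeOn {b w : ℕ} (h : ProperSubsetBound c X red blue 1 b w)
    (hYX : Y ⊂ X) (hY : (colorGraph c red).CliqueFreeOn Y 2) :
    ∀ Z ⊆ Y, AlmostCliqueFreeOn (colorGraph c blue) b Z → #Z ≤ w := fun Z hZ hblue =>
  h Z (hZ.trans_ssubset hYX) ((almostCliqueFreeOn_of_cliqueFreeOn hY).mono hZ) hblue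

lemma card_outerNeighbors_le_of_levels_three_two (b₂₂ : ProperSubsetBound c X red blue 2 2 w₂)
    (hNX : N ⊂ X) (hred : AlmostCliqueFreeOn (colorGraph c red) 3 N)
    (hblue : AlmostCliqueFreeOn (colorGraph c blue) 2 N) (hx : x ∈ N) :
    #(outerNeighbors c p red N x) ≤ w₂ :=
  b₂₂ _ (outerNeighbors_subset.trans_ssubset hNX) (almostCliqueFreeOn_outerNeighbors hred hx)
    (hblue.mono outerNeighbors_subset)

namespace IsGallaiPartition

lemma card_le_two_mul_of_cliqueFreeOn_two (h : IsGallaiPartition c X red blue p)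
    (b₁₁ : ProperSubsetBound c X red blue 1 1 w₀) (hYX : Y ⊂ X)
    (hred : (colorGraph c red).CliqueFreeOn Y 2)
    (hblue : AlmostCliqueFreeOn (colorGraph c blue) 2 Y)
    (hpart : ∀ y ∈ Y, AlmostCliqueFreeOn (colorGraph c blue) 1 (part p Y y)) : #Y ≤ 2 * w₀ :=
  card_le_two_mul_of_parts_joined (h.adj_of_cliqueFreeOn_two hYX.subset hred) hpart hblue
    (b₁₁.of_cliqueFreeOn hYX hred)

lemma card_le_add_of_cliqueFreeOn_two (h : IsGallaiPartition c X red blue p)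
    (b₁₁ : ProperSubsetBound c X red blue 1 1 w₀) (b₁₂ : ProperSubsetBound c X red blue 1 2 w₁)
    (hblue : AlmostCliqueFreeOn (colorGraph c blue) 3 X) (hYX : Y ⊂ X)
    (hred : (colorGraph c red).CliqueFreeOn Y 2) : #Y ≤ w₀ + w₁ :=
  card_le_add_of_parts_joined (h.adj_of_cliqueFreeOn_two hYX.subset hred)
    (fun _ hy => h.swap.almostCliqueFreeOn_part hblue hYX.subset hy) (hblue.mono hYX.subset)
    (b₁₁.of_cliqueFreeOn hYX hred) (b₁₂.of_cliqueFreeOn hYX hred)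

lemma card_le_mul_five (h : IsGallaiPartition c X red blue p) (hG : IsGallaiOn c X)
    (hw₀ : 2 ≤ w₀) (b₁₁ : ProperSubsetBound c X red blue 1 1 w₀)
    (hred : AlmostCliqueFreeOn (colorGraph c red) 2 X)
    (hblue : AlmostCliqueFreeOn (colorGraph c blue) 2 X) : #X ≤ w₀ * 5 := by
  refine card_le_mul_of_card_part_le (p := p) hw₀ (fun x hx => ?_) fun T hT hpart => ?_
  · exact b₁₁ _ (h.part_ssubset hx) (h.almostCliqueFreeOn_part hred subset_rfl hx)
      (h.swap.almostCliqueFreeOn_part hblue subset_rfl hx)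
  · exact card_le_ten_of_almostCliqueFreeOn
      ((h.isGallaiOn_crossColoring hG).mono (coe_subset.2 hT))
      ((hred.mono hT).anti colorGraph_crossColoring_le)
      ((hblue.mono hT).anti colorGraph_crossColoring_le)
      (h.almostCliqueFreeOn_otherGraph_crossColoring hT hpart)

lemma card_le_of_levels_two_three (h : IsGallaiPartition c X red blue p) (hG : IsGallaiOn c X)
    (hw₀ : 2 ≤ w₀) (b₁₁ : ProperSubsetBound c X red blue 1 1 w₀)
    (b₁₂ : ProperSubsetBound c X red blue 1 2 w₁)
    (hred : AlmostCliqueFreeOn (colorGraph c red) 2 X)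
    (hblue : AlmostCliqueFreeOn (colorGraph c blue) 3 X) :
    #X ≤ w₀ * 8 ∨ #X ≤ 2 * w₁ + 3 * w₀ := by
  have hpart_red {Y x} (hYX : Y ⊆ X) (hx : x ∈ Y) := h.almostCliqueFreeOn_part hred hYX hx
  by_cases hall : ∀ x ∈ X, AlmostCliqueFreeOn (colorGraph c blue) 1 (part p X x)
  · refine .inl (card_le_mul_of_card_part_le (p := p) hw₀ (fun x hx => ?_) fun T hT hpart => ?_)
    · exact b₁₁ _ (h.part_ssubset hx) (hpart_red subset_rfl hx) (hall x hx)
    · exact card_le_sixteen_of_almostCliqueFreeOn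
        ((h.isGallaiOn_crossColoring hG).mono (coe_subset.2 hT))
        ((hred.mono hT).anti colorGraph_crossColoring_le)
        ((hblue.mono hT).anti colorGraph_crossColoring_le)
        (h.almostCliqueFreeOn_otherGraph_crossColoring hT hpart)
  right
  push Not at hall
  obtain ⟨x, hx, hlarge⟩ := hall
  have hpart : #(part p X x) ≤ w₁ := b₁₂ _ (h.part_ssubset hx) (hpart_red subset_rfl hx)
    (h.swap.almostCliqueFreeOn_part hblue subset_rfl hx)
  have hblue_outer : #(outerNeighbors c p blue X x) ≤ 2 * w₀ :=
    h.swap.card_le_two_mul_of_cliqueFreeOn_two b₁₁.swap (outerNeighbors_ssubset hx)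
      (h.cliqueFreeOn_outerNeighbors hblue subset_rfl hx hlarge) (hred.mono outerNeighbors_subset)
      fun _ hy => hpart_red outerNeighbors_subset hy
  have hred_outer : #(outerNeighbors c p red X x) ≤ w₀ + w₁ :=
    h.card_le_add_of_cliqueFreeOn_two b₁₁ b₁₂ hblue (outerNeighbors_ssubset hx)
      (h.cliqueFreeOn_outerNeighbors (n := 0) hred subset_rfl hx fun hsmall =>
        hlarge (AlmostCliqueFreeOn.succ (n := 0) hsmall))
  have := h.card_le subset_rfl hx
  omega

lemma outerNeighbors_eq_empty (h : IsGallaiPartition c X red blue p) (hYX : Y ⊆ X) (hx : x ∈ Y)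
    (hY : (colorGraph c i).CliqueFreeOn Y 3)
    (hpart : ¬ (colorGraph c i).CliqueFreeOn (part p Y x) 2) : outerNeighbors c p i Y x = ∅ := by
  refine eq_empty_of_forall_notMem fun y hy => hpart ?_
  refine CliqueFreeOn.subset _ (coe_subset.2 fun a ha => mem_neighborsIn.2 ⟨part_subset ha, ?_⟩)
    (cliqueFreeOn_neighborsIn hY (outerNeighbors_subset hy))
  exact (h.isCompleteBetween hYX hx ha hy).symm

lemma card_outerNeighbors_le_of_cliqueFreeOn_three (h : IsGallaiPartition c X red blue p)
    (b₁₁ : ProperSubsetBound c X red blue 1 1 w₀) (b₂₁ : ProperSubsetBound c X red blue 2 1 w₁)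
    (hred : AlmostCliqueFreeOn (colorGraph c red) 3 X) (hNX : N ⊂ X)
    (hN : (colorGraph c blue).CliqueFreeOn N 3) (hx : x ∈ N) :
    #(outerNeighbors c p blue N x) ≤ w₀ + w₁ :=
  h.swap.card_le_add_of_cliqueFreeOn_two b₁₁.swap b₂₁.swap hred
    (outerNeighbors_subset.trans_ssubset hNX)
    (CliqueFreeOn.subset _ (coe_subset.2 outerNeighbors_subset_neighborsIn)
      (cliqueFreeOn_neighborsIn hN hx))

lemma card_le_of_forall_part_cliqueFreeOn_two (h : IsGallaiPartition c X red blue p)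
    (b₁₁ : ProperSubsetBound c X red blue 1 1 w₀) (b₂₁ : ProperSubsetBound c X red blue 2 1 w₁)
    (b₂₂ : ProperSubsetBound c X red blue 2 2 w₂)
    (hred : AlmostCliqueFreeOn (colorGraph c red) 3 X) (hNX : N ⊂ X) (hne : N.Nonempty)
    (hN : (colorGraph c blue).CliqueFreeOn N 3)
    (hall : ∀ x ∈ N, (colorGraph c blue).CliqueFreeOn (part p N x) 2) :
    #N ≤ 3 * w₀ + 2 * w₁ ∨ #N ≤ 2 * w₀ + w₁ + w₂ := by
  have hsub := hNX.subset
  have hblueN : AlmostCliqueFreeOn (colorGraph c blue) 2 N := almostCliqueFreeOn_of_cliqueFreeOn hN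
  have hpart_ss {x} : part p N x ⊂ X := part_subset.trans_ssubset hNX
  have hpart_blue {x} (hx : x ∈ N) : AlmostCliqueFreeOn (colorGraph c blue) 1 (part p N x) :=
    almostCliqueFreeOn_of_cliqueFreeOn (hall x hx)
  have hblue_outer {x} (hx : x ∈ N) : #(outerNeighbors c p blue N x) ≤ w₀ + w₁ :=
    h.card_outerNeighbors_le_of_cliqueFreeOn_three b₁₁ b₂₁ hred hNX hN hx
  by_cases hall' : ∀ x ∈ N, AlmostCliqueFreeOn (colorGraph c red) 1 (part p N x)
  · obtain ⟨x, hx⟩ := hne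
    have := b₁₁ _ hpart_ss (hall' x hx) (hpart_blue hx)
    have := card_outerNeighbors_le_of_levels_three_two (p := p) b₂₂ hNX (hred.mono hsub) hblueN hx
    have := hblue_outer hx
    have := h.card_le hsub hx
    omega
  · push Not at hall'
    obtain ⟨x, hx, hlarge⟩ := hall'
    have := b₂₁ _ hpart_ss (h.almostCliqueFreeOn_part hred hsub hx) (hpart_blue hx)
    have : #(outerNeighbors c p red N x) ≤ 2 * w₀ :=
      h.card_le_two_mul_of_cliqueFreeOn_two b₁₁ (outerNeighbors_subset.trans_ssubset hNX)
        (h.cliqueFreeOn_outerNeighbors (hred.mono hsub) hsub hx hlarge)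
        (hblueN.mono outerNeighbors_subset)
        fun y hy => (hpart_blue (outerNeighbors_subset hy)).mono (part_mono outerNeighbors_subset)
    have := hblue_outer hx
    have := h.card_le hsub hx
    omega

lemma card_le_of_blue_cliqueFreeOn_three (h : IsGallaiPartition c X red blue p)
    (b₁₁ : ProperSubsetBound c X red blue 1 1 w₀) (b₂₁ : ProperSubsetBound c X red blue 2 1 w₁)
    (b₂₂ : ProperSubsetBound c X red blue 2 2 w₂)
    (hred : AlmostCliqueFreeOn (colorGraph c red) 3 X) (hNX : N ⊂ X) (hne : N.Nonempty)
    (hN : (colorGraph c blue).CliqueFreeOn N 3) :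
    #N ≤ 2 * w₂ ∨ #N ≤ 3 * w₀ + 2 * w₁ ∨ #N ≤ 2 * w₀ + w₁ + w₂ := by
  by_cases hall : ∀ x ∈ N, (colorGraph c blue).CliqueFreeOn (part p N x) 2
  · exact .inr (h.card_le_of_forall_part_cliqueFreeOn_two b₁₁ b₂₁ b₂₂ hred hNX hne hN hall)
  left
  push Not at hall
  obtain ⟨x, hx, hedge⟩ := hall
  have hsub := hNX.subset
  have hblueN : AlmostCliqueFreeOn (colorGraph c blue) 2 N := almostCliqueFreeOn_of_cliqueFreeOn hN
  have := b₂₂ _ (part_subset.trans_ssubset hNX) (h.almostCliqueFreeOn_part hred hsub hx)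
    (hblueN.mono part_subset)
  have := card_outerNeighbors_le_of_levels_three_two (p := p) b₂₂ hNX (hred.mono hsub) hblueN hx
  have hcard := h.card_le hsub hx
  rw [h.outerNeighbors_eq_empty hsub hx hN hedge, card_empty] at hcard
  omega

lemma card_le_of_exists_large_part (h : IsGallaiPartition c X red blue p)
    (b₁₁ : ProperSubsetBound c X red blue 1 1 w₀) (b₁₂ : ProperSubsetBound c X red blue 1 2 w₁)
    (b₂₁ : ProperSubsetBound c X red blue 2 1 w₁) (b₂₂ : ProperSubsetBound c X red blue 2 2 w₂)
    (b₃₁ : ProperSubsetBound c X red blue 3 1 w₃)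
    (hred : AlmostCliqueFreeOn (colorGraph c red) 3 X)
    (hblue : AlmostCliqueFreeOn (colorGraph c blue) 3 X) (hx : x ∈ X)
    (hlarge : ¬ AlmostCliqueFreeOn (colorGraph c red) 1 (part p X x)) :
    #X ≤ w₂ + (w₀ + w₁) + w₃ ∨ #X ≤ w₁ + (w₀ + w₁) + 2 * w₂ ∨
      #X ≤ w₁ + (w₀ + w₁) + (3 * w₀ + 2 * w₁) ∨ #X ≤ w₁ + (w₀ + w₁) + (2 * w₀ + w₁ + w₂) := by
  have hpart_red := h.almostCliqueFreeOn_part hred subset_rfl hx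
  have hpart_blue := h.swap.almostCliqueFreeOn_part hblue subset_rfl hx
  have hcard := h.card_le subset_rfl hx
  have hred_outer : #(outerNeighbors c p red X x) ≤ w₀ + w₁ :=
    h.card_le_add_of_cliqueFreeOn_two b₁₁ b₁₂ hblue (outerNeighbors_ssubset hx)
      (h.cliqueFreeOn_outerNeighbors hred subset_rfl hx hlarge)
  by_cases hedge : (colorGraph c blue).CliqueFreeOn (part p X x) 2
  · have := b₂₁ _ (h.part_ssubset hx) hpart_red (almostCliqueFreeOn_of_cliqueFreeOn hedge)
    have htriangle : (colorGraph c blue).CliqueFreeOn (outerNeighbors c p blue X x) 3 :=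
      h.cliqueFreeOn_outerNeighbors (n := 0) hblue subset_rfl hx fun hsmall =>
        hlarge (AlmostCliqueFreeOn.succ (n := 0) hsmall)
    obtain ⟨y, hy, hxy, hcolor⟩ := h.exists_blue x hx
    have := h.card_le_of_blue_cliqueFreeOn_three b₁₁ b₂₁ b₂₂ hred (outerNeighbors_ssubset hx)
      ⟨y, mem_outerNeighbors.2 ⟨hy, hxy.symm, hcolor⟩⟩ htriangle
    omega
  · have := b₂₂ _ (h.part_ssubset hx) hpart_red hpart_blue
    have := b₃₁ _ (outerNeighbors_ssubset hx) (hred.mono outerNeighbors_subset)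
      (hblue.of_isCompleteBetween outerNeighbors_subset part_subset
        (h.isCompleteBetween subset_rfl hx).symm hedge)
    omega

lemma card_le_of_levels_three_three (h : IsGallaiPartition c X red blue p) (hG : IsGallaiOn c X)
    (hw₀ : 2 ≤ w₀) (b₁₁ : ProperSubsetBound c X red blue 1 1 w₀)
    (b₁₂ : ProperSubsetBound c X red blue 1 2 w₁) (b₂₁ : ProperSubsetBound c X red blue 2 1 w₁)
    (b₂₂ : ProperSubsetBound c X red blue 2 2 w₂) (b₁₃ : ProperSubsetBound c X red blue 1 3 w₃)
    (b₃₁ : ProperSubsetBound c X red blue 3 1 w₃)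
    (hred : AlmostCliqueFreeOn (colorGraph c red) 3 X)
    (hblue : AlmostCliqueFreeOn (colorGraph c blue) 3 X) :
    #X ≤ w₀ * 17 ∨ #X ≤ w₂ + (w₀ + w₁) + w₃ ∨ #X ≤ w₁ + (w₀ + w₁) + 2 * w₂ ∨
      #X ≤ w₁ + (w₀ + w₁) + (3 * w₀ + 2 * w₁) ∨ #X ≤ w₁ + (w₀ + w₁) + (2 * w₀ + w₁ + w₂) := by
  by_cases hall : ∀ x ∈ X, AlmostCliqueFreeOn (colorGraph c red) 1 (part p X x)
  · by_cases hall' : ∀ x ∈ X, AlmostCliqueFreeOn (colorGraph c blue) 1 (part p X x)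
    · refine .inl (card_le_mul_of_card_part_le (p := p) hw₀ (fun x hx => ?_) fun T hT hpart => ?_)
      · exact b₁₁ _ (h.part_ssubset hx) (hall x hx) (hall' x hx)
      · exact card_le_thirtyFour_of_almostCliqueFreeOn
          ((h.isGallaiOn_crossColoring hG).mono (coe_subset.2 hT))
          ((hred.mono hT).anti colorGraph_crossColoring_le)
          ((hblue.mono hT).anti colorGraph_crossColoring_le)
          (h.almostCliqueFreeOn_otherGraph_crossColoring hT hpart)
    · push Not at hall'
      obtain ⟨x, hx, hlarge⟩ := hall'
      exact .inr (h.swap.card_le_of_exists_large_part b₁₁.swap b₂₁.swap b₁₂.swap b₂₂.swap b₁₃.swap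
        hblue hred hx hlarge)
  · push Not at hall
    obtain ⟨x, hx, hlarge⟩ := hall
    exact .inr (h.card_le_of_exists_large_part b₁₁ b₁₂ b₂₁ b₂₂ b₃₁ hred hblue hx hlarge)

/-- A red edge between two parts is isolated in red, so its two ends are singleton parts sending
only blue edges to the rest of `X`. -/
lemma isMonoSplit_of_almostCliqueFreeOn_one (h : IsGallaiPartition c X red blue p)
    (hne : X.Nonempty) (hred : AlmostCliqueFreeOn (colorGraph c red) 1 X) : IsMonoSplit c X := by
  obtain ⟨x, hx⟩ := hne
  obtain ⟨y, hy, hxy, hcolor⟩ := h.exists_red x hx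
  have hadj : (colorGraph c red).Adj x y := colorGraph_adj.2 ⟨hcolor, ne_of_apply_ne p hxy⟩
  have hblue {u v w} (hu : u ∈ X) (hv : v ∈ X) (hw : w ∈ X) (huv : (colorGraph c red).Adj u v)
      (hpuv : p u ≠ p v) (hwu : w ≠ u) (hwv : w ≠ v) : (colorGraph c blue).Adj u w := by
    have hpuw : p u ≠ p w := fun hpuw => by
      have hwv_color := (h.homogeneous u hu w hw v hv hpuw hpuv).symm.trans (colorGraph_adj.1 huv).1
      exact hwu (hred.eq_of_adj hv hw hu (colorGraph_adj.2 ⟨hwv_color, hwv⟩).symm huv.symm)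
    refine colorGraph_adj.2 ⟨(h.color_eq u hu w hw hpuw).resolve_left fun huw => ?_, hwu.symm⟩
    exact hwv (hred.eq_of_adj hu hw hv (colorGraph_adj.2 ⟨huw, hwu.symm⟩) huv)
  rcases (X \ {x, y}).eq_empty_or_nonempty with hempty | hrest
  · refine ⟨red, {x}, {y}, singleton_nonempty x, singleton_nonempty y, ?_, ?_⟩
    · exact Subset.antisymm (insert_subset hx (singleton_subset_iff.2 hy))
        (sdiff_eq_empty_iff_subset.1 hempty)
    · rw [coe_singleton, coe_singleton]
      rintro a rfl b rfl
      exact hadj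
  · refine ⟨blue, {x, y}, X \ {x, y}, insert_nonempty _ _, hrest,
      union_sdiff_of_subset (insert_subset hx (singleton_subset_iff.2 hy)), fun a ha b hb => ?_⟩
    obtain ⟨hbX, hbxy⟩ := mem_sdiff.1 (mem_coe.1 hb)
    rw [mem_insert, mem_singleton, not_or] at hbxy
    rcases mem_insert.1 (mem_coe.1 ha) with rfl | ha
    · exact hblue hx hy hbX hadj hxy hbxy.1 hbxy.2
    · obtain rfl := mem_singleton.1 ha
      exact hblue hy hx hbX hadj.symm hxy.symm hbxy.2 hbxy.1

end IsGallaiPartition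

end PartitionBounds

section MaxOrder

/-- The bound on the order of a Gallai colouring with `s` colours avoiding `K₃`, or just `K₄` minus
an edge, and `r` colours avoiding `K₅` minus an edge, all other colours avoiding `P₃`. For even `s`
and odd `r` it is attained as soon as some colour avoids `P₃`. -/
def maxOrder : ℕ → ℕ → ℕ
  | 0, 0 => 2
  | 1, 0 => 4
  | s + 2, 0 => 5 * maxOrder s 0
  | 0, 1 => 6
  | s + 1, 1 => 8 * maxOrder s 0
  | s, r + 2 => 17 * maxOrder s r
termination_by s r => (r, s)

lemma maxOrder_add_two_zero (s : ℕ) : maxOrder (s + 2) 0 = 5 * maxOrder s 0 := by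
  simp only [maxOrder]

lemma maxOrder_succ_one (s : ℕ) : maxOrder (s + 1) 1 = 8 * maxOrder s 0 := by
  simp only [maxOrder]

lemma maxOrder_add_three_one (s : ℕ) : maxOrder (s + 3) 1 = 5 * maxOrder (s + 1) 1 := by
  rw [maxOrder_succ_one, maxOrder_succ_one, maxOrder_add_two_zero]
  ring

lemma maxOrder_add_two (s r : ℕ) : maxOrder s (r + 2) = 17 * maxOrder s r := by
  simp only [maxOrder]

lemma maxOrder_zero_bounds (s : ℕ) :
    2 ≤ maxOrder s 0 ∧ 2 * maxOrder s 0 ≤ maxOrder (s + 1) 0 ∧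
      2 * maxOrder (s + 1) 0 ≤ 5 * maxOrder s 0 := by
  induction s with
  | zero => simp [maxOrder]
  | succ s ih =>
    have := maxOrder_add_two_zero s
    simp only [add_assoc, Nat.reduceAdd]
    omega

lemma maxOrder_one_bounds (s : ℕ) :
    3 * maxOrder s 0 ≤ maxOrder s 1 ∧ maxOrder s 1 ≤ 4 * maxOrder s 0 ∧
      maxOrder s 0 + maxOrder (s + 1) 0 ≤ maxOrder s 1 ∧ 5 * maxOrder s 1 ≤ maxOrder (s + 2) 1 := by
  rcases s with _ | s
  · simp [maxOrder]
  · have := maxOrder_zero_bounds s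
    have := maxOrder_succ_one s
    have := maxOrder_add_three_one s
    have := maxOrder_add_two_zero s
    simp only [add_assoc, Nat.reduceAdd]
    omega

lemma maxOrder_bounds (s : ℕ) : ∀ r : ℕ,
    2 ≤ maxOrder s r ∧ 2 * maxOrder s r ≤ maxOrder (s + 1) r ∧
      maxOrder s r + maxOrder (s + 1) r ≤ maxOrder s (r + 1)
  | 0 => by
    have := maxOrder_zero_bounds s
    have := maxOrder_one_bounds s
    rw [zero_add]
    omega
  | 1 => by
    have := maxOrder_zero_bounds s
    have := maxOrder_one_bounds s
    have := maxOrder_succ_one s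
    have : maxOrder s 2 = 17 * maxOrder s 0 := maxOrder_add_two s 0
    simp only [Nat.reduceAdd]
    omega
  | r + 2 => by
    have := maxOrder_bounds s r
    have := maxOrder_add_two s (r + 1)
    rw [add_right_comm, maxOrder_add_two, maxOrder_add_two, this]
    omega

lemma two_le_maxOrder (s r : ℕ) : 2 ≤ maxOrder s r :=
  (maxOrder_bounds s r).1

lemma five_mul_maxOrder_le (s : ℕ) : ∀ r : ℕ, 5 * maxOrder s r ≤ maxOrder (s + 2) r
  | 0 => (maxOrder_add_two_zero s).ge
  | 1 => (maxOrder_one_bounds s).2.2.2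
  | r + 2 => by
    have := five_mul_maxOrder_le s r
    rw [maxOrder_add_two, maxOrder_add_two]
    omega

lemma maxOrder_diagonal_bounds (s : ℕ) : ∀ r : ℕ,
    8 * maxOrder s r ≤ maxOrder (s + 1) (r + 1) ∧
      2 * maxOrder (s + 1) r + 3 * maxOrder s r ≤ maxOrder (s + 1) (r + 1)
  | 0 => by
    have := maxOrder_zero_bounds s
    have := maxOrder_succ_one s
    rw [zero_add]
    omega
  | 1 => by
    have := maxOrder_zero_bounds s
    have := maxOrder_one_bounds s
    have := maxOrder_succ_one s
    have : maxOrder (s + 1) 2 = 17 * maxOrder (s + 1) 0 := maxOrder_add_two (s + 1) 0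
    simp only [Nat.reduceAdd]
    omega
  | r + 2 => by
    have := maxOrder_diagonal_bounds s r
    rw [add_right_comm, maxOrder_add_two, maxOrder_add_two, maxOrder_add_two]
    omega

lemma maxOrder_sum_bounds (s : ℕ) : ∀ r : ℕ,
    maxOrder (s + 2) r + (maxOrder s r + maxOrder (s + 1) r) + maxOrder s (r + 1)
        ≤ 17 * maxOrder s r ∧
      maxOrder (s + 1) r + (maxOrder s r + maxOrder (s + 1) r) + 2 * maxOrder (s + 2) r
        ≤ 17 * maxOrder s r ∧
      4 * maxOrder (s + 1) r ≤ 13 * maxOrder s r ∧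
      3 * maxOrder (s + 1) r + maxOrder (s + 2) r ≤ 14 * maxOrder s r
  | 0 => by
    have := maxOrder_zero_bounds s
    have := maxOrder_one_bounds s
    have := maxOrder_add_two_zero s
    rw [zero_add]
    omega
  | 1 => by
    have := maxOrder_zero_bounds s
    have := maxOrder_one_bounds s
    have := maxOrder_succ_one s
    have : maxOrder (s + 2) 1 = 8 * maxOrder (s + 1) 0 := maxOrder_succ_one (s + 1)
    have : maxOrder s 2 = 17 * maxOrder s 0 := maxOrder_add_two s 0
    simp only [Nat.reduceAdd]
    omega
  | r + 2 => by
    have := maxOrder_sum_bounds s r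
    rw [add_right_comm]
    simp only [maxOrder_add_two]
    omega

end MaxOrder

section UpperBound

open scoped Classical

variable {V κ ι : Type*} {c : Sym2 V → κ} {G : SimpleGraph V} {X A B : Finset V} {red blue : κ}
  {p : V → ι} {M : Multiset ℕ} {a b : ℕ}

/-- The function `maxOrder` applied to a multiset of levels, one for each colour, in the sense of
`AlmostCliqueFreeOn`: the entries `1`, `2` and `3` forbid `P₃`, `K₄` minus an edge and `K₅` minus
an edge. -/
def extremalOrder (M : Multiset ℕ) : ℕ :=
  maxOrder (M.count 2) (M.count 3)

lemma two_le_extremalOrder : 2 ≤ extremalOrder M :=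
  two_le_maxOrder _ _

lemma extremalOrder_one_cons : extremalOrder (1 ::ₘ M) = extremalOrder M := by
  simp [extremalOrder]

lemma extremalOrder_two_cons :
    extremalOrder (2 ::ₘ M) = maxOrder (M.count 2 + 1) (M.count 3) := by
  simp [extremalOrder]

lemma extremalOrder_three_cons :
    extremalOrder (3 ::ₘ M) = maxOrder (M.count 2) (M.count 3 + 1) := by
  simp [extremalOrder]

lemma card_le_of_isCompleteBetween
    (hIH : ∀ a ≤ 3, ∀ Y ⊂ X, AlmostCliqueFreeOn G a Y → #Y ≤ extremalOrder (a ::ₘ M))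
    (hAne : A.Nonempty) (hBne : B.Nonempty) (hAB : G.IsCompleteBetween A B) (hX : A ∪ B = X)
    (ha : a ≤ 3) (hfree : AlmostCliqueFreeOn G a X) : #X ≤ extremalOrder (a ::ₘ M) := by
  have hcard : #X ≤ #A + #B := hX ▸ card_union_le A B
  have hA : A ⊆ X := hX ▸ subset_union_left
  have hB : B ⊆ X := hX ▸ subset_union_right
  have hdisj : Disjoint A B := disjoint_coe.1 hAB.disjoint
  have hAX : A ⊂ X := by
    obtain ⟨b, hb⟩ := hBne
    exact ⟨hA, fun h => disjoint_right.1 hdisj hb (h (hB hb))⟩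
  have hBX : B ⊂ X := by
    obtain ⟨a, ha⟩ := hAne
    exact ⟨hB, fun h => disjoint_left.1 hdisj ha (h (hA ha))⟩
  have hbounds := maxOrder_bounds (M.count 2) (M.count 3)
  have h₁ : ∀ Y ⊂ X, AlmostCliqueFreeOn G 1 Y → #Y ≤ maxOrder (M.count 2) (M.count 3) :=
    fun Y hY hfree => (hIH 1 (by simp) Y hY hfree).trans_eq extremalOrder_one_cons
  have h₂ : ∀ Y ⊂ X, AlmostCliqueFreeOn G 2 Y → #Y ≤ maxOrder (M.count 2 + 1) (M.count 3) :=
    fun Y hY hfree => (hIH 2 (by simp) Y hY hfree).trans_eq extremalOrder_two_cons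
  interval_cases a
  · have : #X ≤ 1 := hfree
    exact this.trans (one_le_two.trans two_le_extremalOrder)
  · have hA1 : #A ≤ 1 := hfree.of_isCompleteBetween_nonempty hA hB hAB hBne
    have hB1 : #B ≤ 1 := hfree.of_isCompleteBetween_nonempty hB hA hAB.symm hAne
    rw [extremalOrder_one_cons, extremalOrder]
    omega
  · have hA1 := h₁ A hAX (hfree.of_isCompleteBetween_nonempty hA hB hAB hBne)
    have hB1 := h₁ B hBX (hfree.of_isCompleteBetween_nonempty hB hA hAB.symm hAne)
    rw [extremalOrder_two_cons]
    omega
  · rw [extremalOrder_three_cons]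
    rcases hfree.join hA hB hAB hAne hBne with ⟨hA2, hB1⟩ | ⟨hA1, hB2⟩
    · have := h₂ A hAX hA2
      have := h₁ B hBX hB1
      omega
    · have := h₁ A hAX hA1
      have := h₂ B hBX hB2
      omega

namespace IsGallaiPartition

lemma card_le_extremalOrder_two_two (h : IsGallaiPartition c X red blue p) (hG : IsGallaiOn c X)
    (h₁₁ : ProperSubsetBound c X red blue 1 1 (extremalOrder (1 ::ₘ 1 ::ₘ M)))
    (hred : AlmostCliqueFreeOn (colorGraph c red) 2 X)
    (hblue : AlmostCliqueFreeOn (colorGraph c blue) 2 X) :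
    #X ≤ extremalOrder (2 ::ₘ 2 ::ₘ M) := by
  simp only [extremalOrder_one_cons] at h₁₁
  have hcard := h.card_le_mul_five hG two_le_extremalOrder h₁₁ hred hblue
  have := five_mul_maxOrder_le (M.count 2) (M.count 3)
  simp only [extremalOrder, Multiset.count_cons_self,
    Multiset.count_cons_of_ne (by simp : 3 ≠ 2), add_assoc, Nat.reduceAdd] at hcard ⊢
  omega

lemma card_le_extremalOrder_two_three (h : IsGallaiPartition c X red blue p)
    (hG : IsGallaiOn c X)
    (hIH : ∀ a ≤ 3, ∀ b ≤ 3,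
      ProperSubsetBound c X red blue a b (extremalOrder (a ::ₘ b ::ₘ M)))
    (hred : AlmostCliqueFreeOn (colorGraph c red) 2 X)
    (hblue : AlmostCliqueFreeOn (colorGraph c blue) 3 X) :
    #X ≤ extremalOrder (2 ::ₘ 3 ::ₘ M) := by
  set s := M.count 2 with hs
  set r := M.count 3 with hr
  have h₁₁ : ProperSubsetBound c X red blue 1 1 (maxOrder s r) := by
    simpa [extremalOrder] using hIH 1 (by simp) 1 (by simp)
  have h₁₂ : ProperSubsetBound c X red blue 1 2 (maxOrder (s + 1) r) := by
    simpa [extremalOrder] using hIH 1 (by simp) 2 (by simp)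
  have htarget : extremalOrder (2 ::ₘ 3 ::ₘ M) = maxOrder (s + 1) (r + 1) := by
    simp [extremalOrder, hs, hr]
  have := h.card_le_of_levels_two_three hG (two_le_maxOrder s r) h₁₁ h₁₂ hred hblue
  have := maxOrder_diagonal_bounds s r
  omega

lemma card_le_extremalOrder_three_three (h : IsGallaiPartition c X red blue p)
    (hG : IsGallaiOn c X)
    (hIH : ∀ a ≤ 3, ∀ b ≤ 3,
      ProperSubsetBound c X red blue a b (extremalOrder (a ::ₘ b ::ₘ M)))
    (hred : AlmostCliqueFreeOn (colorGraph c red) 3 X)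
    (hblue : AlmostCliqueFreeOn (colorGraph c blue) 3 X) :
    #X ≤ extremalOrder (3 ::ₘ 3 ::ₘ M) := by
  set s := M.count 2 with hs
  set r := M.count 3 with hr
  have h₁₁ : ProperSubsetBound c X red blue 1 1 (maxOrder s r) := by
    simpa [extremalOrder] using hIH 1 (by simp) 1 (by simp)
  have h₁₂ : ProperSubsetBound c X red blue 1 2 (maxOrder (s + 1) r) := by
    simpa [extremalOrder] using hIH 1 (by simp) 2 (by simp)
  have h₂₁ : ProperSubsetBound c X red blue 2 1 (maxOrder (s + 1) r) := by
    simpa [extremalOrder] using hIH 2 (by simp) 1 (by simp)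
  have h₂₂ : ProperSubsetBound c X red blue 2 2 (maxOrder (s + 2) r) := by
    simpa [extremalOrder] using hIH 2 (by simp) 2 (by simp)
  have h₁₃ : ProperSubsetBound c X red blue 1 3 (maxOrder s (r + 1)) := by
    simpa [extremalOrder] using hIH 1 (by simp) 3 (by simp)
  have h₃₁ : ProperSubsetBound c X red blue 3 1 (maxOrder s (r + 1)) := by
    simpa [extremalOrder] using hIH 3 (by simp) 1 (by simp)
  have htarget : extremalOrder (3 ::ₘ 3 ::ₘ M) = 17 * maxOrder s r := by
    rw [← maxOrder_add_two]
    simp [extremalOrder, hs, hr]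
  have := h.card_le_of_levels_three_three hG (two_le_maxOrder s r) h₁₁ h₁₂ h₂₁ h₂₂ h₁₃ h₃₁ hred
    hblue
  have := maxOrder_sum_bounds s r
  omega

lemma isMonoSplit_or_card_le (h : IsGallaiPartition c X red blue p) (hG : IsGallaiOn c X)
    (hIH : ∀ a ≤ 3, ∀ b ≤ 3,
      ProperSubsetBound c X red blue a b (extremalOrder (a ::ₘ b ::ₘ M)))
    (ha : a ≤ 3) (hb : b ≤ 3) (hred : AlmostCliqueFreeOn (colorGraph c red) a X)
    (hblue : AlmostCliqueFreeOn (colorGraph c blue) b X) :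
    IsMonoSplit c X ∨ #X ≤ extremalOrder (a ::ₘ b ::ₘ M) := by
  wlog hab : a ≤ b generalizing red blue a b
  · rw [Multiset.cons_swap]
    exact this h.swap (fun a ha b hb => Multiset.cons_swap a b M ▸ (hIH b hb a ha).swap) hb ha
      hblue hred (le_of_not_ge hab)
  rcases Nat.lt_or_ge a 2 with ha2 | ha2
  · rcases X.eq_empty_or_nonempty with rfl | hne
    · simp
    have hred1 : AlmostCliqueFreeOn (colorGraph c red) 1 X := by
      interval_cases a
      exacts [hred.succ, hred]
    exact .inl (h.isMonoSplit_of_almostCliqueFreeOn_one hne hred1)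
  · obtain ⟨rfl, rfl⟩ | ⟨rfl, rfl⟩ | ⟨rfl, rfl⟩ :
      a = 2 ∧ b = 2 ∨ a = 2 ∧ b = 3 ∨ a = 3 ∧ b = 3 := by omega
    · exact .inr (h.card_le_extremalOrder_two_two hG (hIH 1 (by simp) 1 (by simp)) hred hblue)
    · exact .inr (h.card_le_extremalOrder_two_three hG hIH hred hblue)
    · exact .inr (h.card_le_extremalOrder_three_three hG hIH hred hblue)

end IsGallaiPartition

lemma exists_map_update_eq_cons [Fintype κ] (t : κ → ℕ) (i : κ) :
    ∃ M : Multiset ℕ, ∀ a, univ.val.map (Function.update t i a) = a ::ₘ M := by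
  obtain ⟨N, hN⟩ := Multiset.exists_cons_of_mem (mem_univ_val i)
  have hnodup : (i ::ₘ N).Nodup := hN ▸ univ.nodup
  refine ⟨N.map t, fun a => ?_⟩
  rw [hN, Multiset.map_cons, Function.update_self]
  congr 1
  refine Multiset.map_congr rfl fun j hj => Function.update_of_ne ?_ a t
  exact ne_of_mem_of_not_mem hj (Multiset.nodup_cons.1 hnodup).1

lemma exists_map_update_update_eq_cons_cons [Fintype κ] (t : κ → ℕ) {i j : κ} (hij : i ≠ j) :
    ∃ M : Multiset ℕ, ∀ a b,
      univ.val.map (Function.update (Function.update t i a) j b) = a ::ₘ b ::ₘ M := by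
  obtain ⟨N, hN⟩ := Multiset.exists_cons_of_mem (mem_univ_val i)
  obtain ⟨N, rfl⟩ := Multiset.exists_cons_of_mem
    ((Multiset.mem_cons.1 (hN ▸ mem_univ_val j)).resolve_left hij.symm)
  have hnodup : (i ::ₘ j ::ₘ N).Nodup := hN ▸ univ.nodup
  simp only [Multiset.nodup_cons, Multiset.mem_cons, not_or] at hnodup
  refine ⟨N.map t, fun a b => ?_⟩
  rw [hN, Multiset.map_cons, Multiset.map_cons, Function.update_self, Function.update_of_ne hij,
    Function.update_self]
  congr 2
  refine Multiset.map_congr rfl fun l hl => ?_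
  rw [Function.update_of_ne (ne_of_mem_of_not_mem hl hnodup.2.1),
    Function.update_of_ne (ne_of_mem_of_not_mem hl hnodup.1.2)]

/-- The graph forbidden in colour `i` is the one of level `t i ≤ 3`, and `c` avoids all of them
inside `X`. -/
def AvoidsLevelsOn (c : Sym2 V → κ) (t : κ → ℕ) (X : Finset V) : Prop :=
  ∀ i, t i ≤ 3 ∧ AlmostCliqueFreeOn (colorGraph c i) (t i) X

lemma AvoidsLevelsOn.mono {Y : Finset V} {t : κ → ℕ} (h : AvoidsLevelsOn c t Y) (hXY : X ⊆ Y) :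
    AvoidsLevelsOn c t X :=
  fun i => ⟨(h i).1, (h i).2.mono hXY⟩

lemma AvoidsLevelsOn.update {t : κ → ℕ} {i : κ} (h : AvoidsLevelsOn c t X) (ha : a ≤ 3)
    (hi : AlmostCliqueFreeOn (colorGraph c i) a X) :
    AvoidsLevelsOn c (Function.update t i a) X := by
  intro j
  rcases eq_or_ne j i with rfl | hji
  · simpa using ⟨ha, hi⟩
  · simpa [Function.update_of_ne hji] using h j

lemma IsMonoSplit.card_le_extremalOrder [Fintype κ] {t : κ → ℕ} (h : IsMonoSplit c X)
    (hIH : ∀ Y ⊂ X, ∀ t : κ → ℕ, AvoidsLevelsOn c t Y → #Y ≤ extremalOrder (univ.val.map t))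
    (ht : AvoidsLevelsOn c t X) : #X ≤ extremalOrder (univ.val.map t) := by
  obtain ⟨i, A, B, hA, hB, hX, hAB⟩ := h
  obtain ⟨M, hM⟩ := exists_map_update_eq_cons t i
  have htM : univ.val.map t = t i ::ₘ M := by
    rw [← hM, Function.update_eq_self]
  rw [htM]
  refine card_le_of_isCompleteBetween (fun a ha Y hY hYa => ?_) hA hB hAB hX (ht i).1 (ht i).2
  exact hM a ▸ hIH Y hY _ ((ht.mono hY.1).update ha hYa)

lemma IsGallaiPartition.isMonoSplit_or_card_le_extremalOrder [Fintype κ] {t : κ → ℕ}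
    (h : IsGallaiPartition c X red blue p) (hG : IsGallaiOn c X)
    (hIH : ∀ Y ⊂ X, ∀ t : κ → ℕ, AvoidsLevelsOn c t Y → #Y ≤ extremalOrder (univ.val.map t))
    (ht : AvoidsLevelsOn c t X) : IsMonoSplit c X ∨ #X ≤ extremalOrder (univ.val.map t) := by
  obtain ⟨M, hM⟩ := exists_map_update_update_eq_cons_cons t h.ne
  have htM : univ.val.map t = t red ::ₘ t blue ::ₘ M := by
    rw [← hM, Function.update_eq_self, Function.update_eq_self]
  rw [htM]
  refine h.isMonoSplit_or_card_le hG (fun a ha b hb Y hY hYa hYb => ?_) (ht red).1 (ht blue).1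
    (ht red).2 (ht blue).2
  exact hM a b ▸ hIH Y hY _ (((ht.mono hY.1).update ha hYa).update hb hYb)

theorem card_le_extremalOrder [Fintype κ] {t : κ → ℕ} (hG : IsGallaiOn c X)
    (ht : AvoidsLevelsOn c t X) : #X ≤ extremalOrder (univ.val.map t) := by
  induction X using Finset.strongInduction generalizing t with
  | H X ih =>
    have hIH : ∀ Y ⊂ X, ∀ t : κ → ℕ, AvoidsLevelsOn c t Y → #Y ≤ extremalOrder (univ.val.map t) :=
      fun Y hY t => ih Y hY (hG.mono hY.1)
    rcases Nat.lt_or_ge #X 2 with hX | hX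
    · exact hX.le.trans two_le_extremalOrder
    rcases hG.isMonoSplit_or_exists_isGallaiPartition hX with h | ⟨red, blue, p, hp⟩
    · exact h.card_le_extremalOrder hIH ht
    · exact (hp.isMonoSplit_or_card_le_extremalOrder hG hIH ht).elim
        (·.card_le_extremalOrder hIH ht) id

end UpperBound

section LowerBound

variable {V W κ : Type*} {c : Sym2 V → κ} {d : Sym2 W → κ} {G : SimpleGraph V} {i : κ}
  {M : Multiset ℕ} {n q x y : ℕ}

/-- The extremal colourings avoid even smaller graphs than required: `K₃` in level `2` and `K₄` in
level `3`, while level `0` stands for an unused colour. -/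
def IsLevelFree (G : SimpleGraph V) : ℕ → Prop
  | 0 => G = ⊥
  | 1 => GP3.Free G
  | n + 2 => G.CliqueFree (n + 3)

lemma isLevelFree_iff_cliqueFree (hn : 2 ≤ n) : IsLevelFree G n ↔ G.CliqueFree (n + 1) := by
  obtain ⟨n, rfl⟩ := Nat.exists_eq_add_of_le' hn
  rfl

lemma isLevelFree_bot : IsLevelFree (⊥ : SimpleGraph V) n := by
  rcases n with _ | _ | n
  · rfl
  · refine free_bot fun h => ?_
    have : GP3.Adj 0 1 := by simp [GP3]
    simp [h] at this
  · exact cliqueFree_bot (by omega)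

open scoped Classical in
/-- The substitution of the colouring `c` for every vertex of the colouring `d`. -/
noncomputable def blowUp (d : Sym2 W → κ) (c : Sym2 V → κ) : Sym2 (W × V) → κ :=
  Sym2.lift ⟨fun x y => if x.1 = y.1 then c s(x.2, y.2) else d s(x.1, y.1), fun x y => by
    simp only [Sym2.eq_swap, eq_comm]⟩

lemma blowUp_of_fst_eq {x y : W × V} (h : x.1 = y.1) : blowUp d c s(x, y) = c s(x.2, y.2) := by
  simp [blowUp, h]

lemma blowUp_of_fst_ne {x y : W × V} (h : x.1 ≠ y.1) : blowUp d c s(x, y) = d s(x.1, y.1) := by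
  simp [blowUp, h]

lemma IsGallaiOn.blowUp (hd : IsGallaiOn d Set.univ) (hc : IsGallaiOn c Set.univ) :
    IsGallaiOn (blowUp d c) Set.univ := by
  intro u _ v _ w _ huv huw hvw
  by_cases huv₁ : u.1 = v.1
  · by_cases huw₁ : u.1 = w.1
    · have hvw₁ : v.1 = w.1 := huv₁.symm.trans huw₁
      rw [blowUp_of_fst_eq huv₁, blowUp_of_fst_eq huw₁, blowUp_of_fst_eq hvw₁]
      exact hc _ trivial _ trivial _ trivial (fun h => huv (Prod.ext huv₁ h))
        (fun h => huw (Prod.ext huw₁ h)) (fun h => hvw (Prod.ext hvw₁ h))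
    · rw [blowUp_of_fst_ne huw₁, blowUp_of_fst_ne fun h => huw₁ (huv₁.trans h), huv₁]
      simp
  · by_cases huw₁ : u.1 = w.1
    · rw [blowUp_of_fst_ne huv₁, blowUp_of_fst_ne fun h => huv₁ (huw₁.trans h.symm), huw₁,
        Sym2.eq_swap]
      simp
    · by_cases hvw₁ : v.1 = w.1
      · rw [blowUp_of_fst_ne huv₁, blowUp_of_fst_ne huw₁, hvw₁]
        simp
      · rw [blowUp_of_fst_ne huv₁, blowUp_of_fst_ne huw₁, blowUp_of_fst_ne hvw₁]
        exact hd _ trivial _ trivial _ trivial huv₁ huw₁ hvw₁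

lemma colorGraph_blowUp_adj_of_fst_ne {x y : W × V} (h : x.1 ≠ y.1) :
    (colorGraph (blowUp d c) i).Adj x y ↔ (colorGraph d i).Adj x.1 y.1 := by
  have hxy : x ≠ y := fun hxy => h (congrArg Prod.fst hxy)
  simp [blowUp_of_fst_ne h, h, hxy]

lemma colorGraph_blowUp_adj_of_fst_eq {x y : W × V} (h : x.1 = y.1) :
    (colorGraph (blowUp d c) i).Adj x y ↔ (colorGraph c i).Adj x.2 y.2 := by
  simp [blowUp_of_fst_eq h, Prod.ext_iff, h]

lemma fst_eq_of_adj_blowUp (hd : colorGraph d i = ⊥) {x y : W × V}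
    (h : (colorGraph (blowUp d c) i).Adj x y) : x.1 = y.1 := by
  by_contra hxy
  rw [colorGraph_blowUp_adj_of_fst_ne hxy, hd] at h
  exact h

/-- A connected subgraph in a colour that `d` does not use stays inside one copy of `V`. -/
lemma free_colorGraph_blowUp {U : Type*} {F : SimpleGraph U} (hF : F.Preconnected)
    (hd : colorGraph d i = ⊥) (h : F.Free (colorGraph c i)) :
    F.Free (colorGraph (blowUp d c) i) := by
  rintro ⟨f⟩
  have hfst (a b : U) : (f a).1 = (f b).1 := by
    obtain ⟨p⟩ := hF a b
    induction p with
    | nil => rfl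
    | cons hadj _ ih => exact (fst_eq_of_adj_blowUp hd (f.toHom.map_adj hadj)).trans ih
  refine h ⟨⟨⟨fun a => (f a).2, fun hab => ?_⟩, fun a b hab => ?_⟩⟩
  · exact (colorGraph_blowUp_adj_of_fst_eq (hfst _ _)).1 (f.toHom.map_adj hab)
  · exact f.injective (Prod.ext (hfst a b) hab)

lemma IsLevelFree.blowUp (hd : colorGraph d i = ⊥) (h : IsLevelFree (colorGraph c i) n) :
    IsLevelFree (colorGraph (blowUp d c) i) n := by
  rcases n with _ | _ | n
  · refine eq_bot_iff_forall_not_adj.2 fun x y hxy => ?_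
    rw [colorGraph_blowUp_adj_of_fst_eq (fst_eq_of_adj_blowUp hd hxy),
      show colorGraph c i = ⊥ from h] at hxy
    exact hxy
  · refine free_colorGraph_blowUp (fun a b => ?_) hd h
    have h₀ : GP3.Adj 0 1 := by simp [GP3]
    have h₂ : GP3.Adj 2 1 := by simp [GP3]
    have hreach (a : Fin 3) : GP3.Reachable a 1 := by
      fin_cases a
      exacts [h₀.reachable, .rfl, h₂.reachable]
    exact (hreach a).trans (hreach b).symm
  · have hcard : n + 3 = Fintype.card (Fin (n + 3)) := (Fintype.card_fin _).symm
    rw [IsLevelFree, hcard, cliqueFree_iff_top_free] at h ⊢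
    exact free_colorGraph_blowUp preconnected_top hd h

lemma cliqueFree_colorGraph_blowUp (hc : colorGraph c i = ⊥) (h : (colorGraph d i).CliqueFree n) :
    (colorGraph (blowUp d c) i).CliqueFree n := by
  have hfst {x y : W × V} (hxy : (colorGraph (blowUp d c) i).Adj x y) :
      (colorGraph d i).Adj x.1 y.1 := by
    by_cases hxy₁ : x.1 = y.1
    · rw [colorGraph_blowUp_adj_of_fst_eq hxy₁, hc] at hxy
      exact hxy.elim
    · exact (colorGraph_blowUp_adj_of_fst_ne hxy₁).1 hxy
  rw [cliqueFree_iff] at h ⊢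
  let φ : colorGraph (blowUp d c) i →g colorGraph d i := ⟨Prod.fst, hfst⟩
  exact ⟨fun f => h.elim ⟨φ.comp f.toHom, Hom.injective_of_top_hom _⟩⟩

lemma colorGraph_const_of_ne {j : κ} (h : j ≠ i) : colorGraph (fun _ : Sym2 V => j) i = ⊥ := by
  ext
  simp [h]

lemma isGallaiOn_const (i : κ) (X : Set V) : IsGallaiOn (fun _ => i) X :=
  fun _ _ _ _ _ _ _ _ _ => .inl rfl

lemma isLevelFree_colorGraph_blowUp {t t' : κ → ℕ} (hc : ∀ i, IsLevelFree (colorGraph c i) (t' i))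
    (hd : ∀ i, colorGraph d i = ⊥ ∧ t' i = t i ∨
      (colorGraph d i).CliqueFree (t i + 1) ∧ t' i = 0 ∧ 2 ≤ t i) (i : κ) :
    IsLevelFree (colorGraph (blowUp d c) i) (t i) := by
  have hci := hc i
  rcases hd i with ⟨hdi, ht⟩ | ⟨hdi, ht, htwo⟩
  · exact (ht ▸ hci).blowUp hdi
  · rw [ht, IsLevelFree] at hci
    exact (isLevelFree_iff_cliqueFree htwo).2 (cliqueFree_colorGraph_blowUp hci hdi)

open scoped Classical in
/-- The colouring whose edges of colour `red` form `H`, all the others having colour `blue`. -/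
noncomputable def twoColoring (H : SimpleGraph W) (red blue : κ) (e : Sym2 W) : κ :=
  if e ∈ H.edgeSet then red else blue

lemma isGallaiOn_twoColoring (H : SimpleGraph W) (red blue : κ) (X : Set W) :
    IsGallaiOn (twoColoring H red blue) X := by
  intro u _ v _ w _ _ _ _
  simp only [twoColoring]
  split_ifs <;> simp

lemma colorGraph_twoColoring_red {H : SimpleGraph W} {red blue : κ} (h : red ≠ blue) :
    colorGraph (twoColoring H red blue) red = H := by
  ext u v
  by_cases huv : H.Adj u v
  · simp [twoColoring, huv, huv.ne]
  · simp [twoColoring, huv, h.symm]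

lemma colorGraph_twoColoring_blue {H : SimpleGraph W} {red blue : κ} (h : red ≠ blue) :
    colorGraph (twoColoring H red blue) blue = Hᶜ := by
  ext u v
  by_cases huv : H.Adj u v
  · simp [twoColoring, huv, h]
  · simp [twoColoring, huv]

lemma colorGraph_twoColoring_of_ne {H : SimpleGraph W} {red blue : κ} (hred : red ≠ i)
    (hblue : blue ≠ i) : colorGraph (twoColoring H red blue) i = ⊥ := by
  ext u v
  by_cases huv : H.Adj u v <;> simp [twoColoring, huv, hred, hblue]

section Realizes

variable [Fintype κ]

variable (κ) in
/-- However the levels listed in `M` are assigned to the colours, some complete graph of order `n`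
has a Gallai colouring avoiding them. -/
def Realizes (M : Multiset ℕ) (n : ℕ) : Prop :=
  ∀ t : κ → ℕ, univ.val.map t = M → ∃ (V : Type) (_ : Fintype V) (c : Sym2 V → κ),
    Fintype.card V = n ∧ IsGallaiOn c Set.univ ∧ ∀ i, IsLevelFree (colorGraph c i) (t i)

lemma realizes_two (h : 1 ∈ M) : Realizes κ M 2 := by
  rintro t rfl
  obtain ⟨i, -, hi⟩ := Multiset.mem_map.1 h
  refine ⟨Bool, inferInstance, fun _ => i, Fintype.card_bool, isGallaiOn_const i _, fun j => ?_⟩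
  rcases eq_or_ne i j with rfl | hij
  · rw [hi]
    rintro ⟨f⟩
    simpa using Fintype.card_le_of_injective f f.injective
  · rw [colorGraph_const_of_ne hij]
    exact isLevelFree_bot

open scoped Classical in
lemma Realizes.cons (h : Realizes κ (0 ::ₘ M) n) (hx : 2 ≤ x) : Realizes κ (x ::ₘ M) (x * n) := by
  intro t ht
  obtain ⟨i, -, rfl⟩ := Multiset.mem_map.1 (ht ▸ Multiset.mem_cons_self x M)
  obtain ⟨M', hM'⟩ := exists_map_update_eq_cons t i
  obtain rfl : M' = M := by
    rw [← Multiset.cons_inj_right (t i), ← hM', Function.update_eq_self, ht]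
  obtain ⟨V, _, c, rfl, hG, hc⟩ := h _ (hM' 0)
  refine ⟨Fin (t i) × V, inferInstance, blowUp (fun _ => i) c, by simp,
    (isGallaiOn_const i _).blowUp hG, isLevelFree_colorGraph_blowUp hc fun j => ?_⟩
  rcases eq_or_ne i j with rfl | hij
  · exact .inr ⟨cliqueFree_of_card_lt (by simp), by simp, hx⟩
  · exact .inl ⟨colorGraph_const_of_ne hij, Function.update_of_ne hij.symm _ _⟩

open scoped Classical in
lemma exists_ne_of_map_eq_cons_cons {t : κ → ℕ} (ht : univ.val.map t = x ::ₘ y ::ₘ M) :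
    ∃ i j, i ≠ j ∧ t i = x ∧ t j = y ∧
      univ.val.map (Function.update (Function.update t i 0) j 0) = 0 ::ₘ 0 ::ₘ M := by
  obtain ⟨i, -, rfl, hM⟩ := (Multiset.map_eq_cons _ _ _ _).2 ht
  obtain ⟨j, hj, rfl⟩ := Multiset.mem_map.1 (hM ▸ Multiset.mem_cons_self y M)
  have hij : i ≠ j := by
    rintro rfl
    exact univ.nodup.notMem_erase hj
  obtain ⟨M', hM'⟩ := exists_map_update_update_eq_cons_cons t hij
  obtain rfl : M' = M := by
    rw [← Multiset.cons_inj_right (t j), ← Multiset.cons_inj_right (t i), ← hM',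
      Function.update_eq_self, Function.update_eq_self, ht]
  exact ⟨i, j, hij, rfl, rfl, hM' 0 0⟩

open scoped Classical in
lemma Realizes.cons_cons {H : SimpleGraph (Fin q)} (h : Realizes κ (0 ::ₘ 0 ::ₘ M) n)
    (hx : 2 ≤ x) (hy : 2 ≤ y) (hH : H.CliqueFree (x + 1)) (hHc : Hᶜ.CliqueFree (y + 1)) :
    Realizes κ (x ::ₘ y ::ₘ M) (q * n) := by
  intro t ht
  obtain ⟨red, blue, hne, rfl, rfl, hM⟩ := exists_ne_of_map_eq_cons_cons ht
  obtain ⟨V, _, c, rfl, hG, hc⟩ := h _ hM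
  refine ⟨Fin q × V, inferInstance, blowUp (twoColoring H red blue) c, by simp,
    (isGallaiOn_twoColoring H red blue _).blowUp hG, isLevelFree_colorGraph_blowUp hc fun i => ?_⟩
  rcases eq_or_ne red i with rfl | hred
  · exact .inr ⟨(colorGraph_twoColoring_red hne).symm ▸ hH, by simp [hne], hx⟩
  rcases eq_or_ne blue i with rfl | hblue
  · exact .inr ⟨(colorGraph_twoColoring_blue hne).symm ▸ hHc, by simp, hy⟩
  · exact .inl ⟨colorGraph_twoColoring_of_ne hred hblue,
      by simp [Function.update_of_ne, hred.symm, hblue.symm]⟩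

end Realizes

lemma cliqueFree_three_of_forall_adj
    (h : ∀ u v, G.Adj u v → ∀ w, G.Adj u w → ¬ G.Adj v w) : G.CliqueFree 3 := by
  classical
  intro K hK
  obtain ⟨u, v, w, huv, huw, hvw, -⟩ := is3Clique_iff.1 hK
  exact h u v huv w huw hvw

lemma cliqueFree_four_of_forall_adj
    (h : ∀ u v, G.Adj u v → ∀ w, G.Adj u w ∧ G.Adj v w →
      ∀ x, ¬ (G.Adj u x ∧ G.Adj v x ∧ G.Adj w x)) : G.CliqueFree 4 := by
  classical
  intro K hK
  obtain ⟨u, hu⟩ := card_pos.1 (hK.card_eq ▸ Nat.succ_pos 3 : 0 < #K)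
  have hu' {v} (hv : v ∈ K.erase u) : G.Adj u v :=
    hK.isClique hu (mem_of_mem_erase hv) (ne_of_mem_erase hv).symm
  obtain ⟨v, w, x, hvw, hvx, hwx, hK'⟩ := is3Clique_iff.1 (hK.erase_of_mem hu)
  simp only [hK'] at hu'
  exact h u v (hu' (by simp)) w ⟨hu' (by simp), hvw⟩ x ⟨hu' (by simp), hvx, hwx⟩

lemma cliqueFree_circulantGraph_five :
    (circulantGraph {1} : SimpleGraph (Fin 5)).CliqueFree 3 ∧
      (circulantGraph {1} : SimpleGraph (Fin 5))ᶜ.CliqueFree 3 :=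
  ⟨cliqueFree_three_of_forall_adj (by decide +kernel),
    cliqueFree_three_of_forall_adj (by decide +kernel)⟩

set_option synthInstance.maxSize 256 in
lemma cliqueFree_circulantGraph_eight :
    (circulantGraph {1, 4} : SimpleGraph (Fin 8)).CliqueFree 3 ∧
      (circulantGraph {1, 4} : SimpleGraph (Fin 8))ᶜ.CliqueFree 4 :=
  ⟨cliqueFree_three_of_forall_adj (by decide +kernel),
    cliqueFree_four_of_forall_adj (by decide +kernel)⟩

set_option synthInstance.maxSize 256 in
/-- Up to sign these are the quadratic residues modulo `17`, so this is the Paley graph. -/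
lemma cliqueFree_circulantGraph_seventeen :
    (circulantGraph {1, 2, 4, 8} : SimpleGraph (Fin 17)).CliqueFree 4 ∧
      (circulantGraph {1, 2, 4, 8} : SimpleGraph (Fin 17))ᶜ.CliqueFree 4 :=
  ⟨cliqueFree_four_of_forall_adj (by decide +kernel),
    cliqueFree_four_of_forall_adj (by decide +kernel)⟩

lemma exists_eq_cons_cons_of_two_le_count (h : 2 ≤ M.count x) : ∃ N, M = x ::ₘ x ::ₘ N := by
  obtain ⟨N, rfl⟩ := Multiset.le_iff_exists_add.1 (Multiset.le_count_iff_replicate_le.1 h)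
  exact ⟨N, by simp [Multiset.replicate_succ]⟩

variable [Fintype κ]

lemma realizes_of_count_three_eq_one (l : ℕ) (h₁ : 1 ∈ M) (h₂ : M.count 2 = 2 * l)
    (h₃ : M.count 3 = 1) : Realizes κ M (maxOrder (2 * l) 1) := by
  have h₃mem : 3 ∈ M := Multiset.count_pos.1 (by omega)
  induction l using Nat.twoStepInduction generalizing M with
  | zero =>
    obtain ⟨M, rfl⟩ := Multiset.exists_cons_of_mem h₃mem
    have h : Realizes κ (3 ::ₘ M) (3 * 2) := (realizes_two (by simpa using h₁)).cons (by simp)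
    simpa [maxOrder] using h
  | one =>
    obtain ⟨M, rfl⟩ := Multiset.exists_cons_of_mem h₃mem
    obtain ⟨M, rfl⟩ : ∃ N, M = 2 ::ₘ 2 ::ₘ N :=
      exists_eq_cons_cons_of_two_le_count (by simpa using h₂.ge)
    have hpair : Realizes κ (2 ::ₘ 0 ::ₘ 0 ::ₘ M) (2 * 2) :=
      (realizes_two (by simpa using h₁)).cons le_rfl
    rw [Multiset.cons_swap 2, Multiset.cons_swap 2] at hpair
    have h := hpair.cons_cons le_rfl (by simp) cliqueFree_circulantGraph_eight.1
      cliqueFree_circulantGraph_eight.2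
    rw [Multiset.cons_swap 3]
    simpa [maxOrder, Multiset.cons_swap 3] using h
  | more l _ ih =>
    obtain ⟨M, rfl⟩ := exists_eq_cons_cons_of_two_le_count (by omega : 2 ≤ M.count 2)
    have hrec : Realizes κ (0 ::ₘ 0 ::ₘ M) (maxOrder (2 * (l + 1)) 1) := by
      simp only [Multiset.count_cons_self] at h₂
      refine ih (by simpa using h₁) ?_ (by simpa using h₃) (by simpa using h₃mem)
      simp only [Multiset.count_cons_of_ne (by simp : 2 ≠ 0)]
      omega
    have h := hrec.cons_cons le_rfl le_rfl cliqueFree_circulantGraph_five.1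
      cliqueFree_circulantGraph_five.2
    have hfive : maxOrder (2 * (l + 2)) 1 = 5 * maxOrder (2 * (l + 1)) 1 :=
      maxOrder_add_three_one (2 * l + 1)
    exact hfive ▸ h

theorem realizes_extremalOrder (h₁ : 1 ∈ M) (h₂ : Even (M.count 2)) (h₃ : Odd (M.count 3)) :
    Realizes κ M (extremalOrder M) := by
  obtain ⟨l, hl⟩ := even_iff_two_dvd.1 h₂
  obtain ⟨m, hm⟩ := h₃
  rw [extremalOrder, hl, hm]
  clear h₂
  induction m generalizing M with
  | zero => exact realizes_of_count_three_eq_one l h₁ hl hm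
  | succ m ih =>
    obtain ⟨M, rfl⟩ := exists_eq_cons_cons_of_two_le_count (by omega : 2 ≤ M.count 3)
    have hrec : Realizes κ (0 ::ₘ 0 ::ₘ M) (maxOrder (2 * l) (2 * m + 1)) := by
      simp only [Multiset.count_cons_self] at hm
      refine ih (by simpa using h₁) (by simpa using hl) ?_
      simp only [Multiset.count_cons_of_ne (by simp : 3 ≠ 0)]
      omega
    have h := hrec.cons_cons (by simp) (by simp) cliqueFree_circulantGraph_seventeen.1
      cliqueFree_circulantGraph_seventeen.2
    rwa [← maxOrder_add_two] at h

end LowerBound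

section GallaiRamseyNumber

variable {V W : Type*} {G : SimpleGraph V} {X : Finset V} {n k s r : ℕ}
  {i : Fin k}

lemma isGallaiColoring_iff {c : Sym2 (Fin n) → Fin k} :
    IsGallaiColoring (fun u v => c s(u, v)) ↔ IsGallaiOn c Set.univ := by
  constructor
  · rintro ⟨-, h⟩ u - v - w - huv huw hvw
    by_contra! hne
    exact h ⟨u, v, w, huv, huw, hvw, hne⟩
  · refine fun h => ⟨fun _ _ => congrArg c Sym2.eq_swap, ?_⟩
    rintro ⟨u, v, w, huv, huw, hvw, h₁, h₂, h₃⟩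
    rcases h u trivial v trivial w trivial huv huw hvw with h | h | h
    exacts [h₁ h, h₂ h, h₃ h]

lemma hasMonoCopy_iff {U : Type} {F : SimpleGraph U} {c : Sym2 (Fin n) → Fin k} :
    HasMonoCopy F (fun u v => c s(u, v)) i ↔ F ⊑ colorGraph c i := by
  constructor
  · rintro ⟨f, hf, hF⟩
    exact ⟨⟨⟨f, fun h => colorGraph_adj.2 ⟨hF _ _ h, hf.ne h.ne⟩⟩, hf⟩⟩
  · rintro ⟨f⟩
    exact ⟨f, f.injective, fun a b h => (colorGraph_adj.1 (f.toHom.map_adj h)).1⟩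

lemma IsGallaiOn.comap {κ : Type*} {c : Sym2 V → κ} (h : IsGallaiOn c Set.univ) (f : W ↪ V) :
    IsGallaiOn (c ∘ Sym2.map f) Set.univ :=
  fun _ _ _ _ _ _ huv huw hvw => h _ trivial _ trivial _ trivial
    (f.injective.ne huv) (f.injective.ne huw) (f.injective.ne hvw)

lemma colorGraph_comp_map_isContained {κ : Type*} (c : Sym2 V → κ) (f : W ↪ V) (i : κ) :
    colorGraph (c ∘ Sym2.map f) i ⊑ colorGraph c i :=
  ⟨⟨⟨f, fun h => by simpa using h⟩, f.injective⟩⟩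

lemma GR_eq_add_one {F : Fin k → Σ V : Type, SimpleGraph V}
    (hupper : ∀ c : Sym2 (Fin (n + 1)) → Fin k, IsGallaiOn c Set.univ →
      ∃ i, (F i).2 ⊑ colorGraph c i)
    (hlower : ∃ (V : Type) (_ : Fintype V) (c : Sym2 V → Fin k), Fintype.card V = n ∧
      IsGallaiOn c Set.univ ∧ ∀ i, (F i).2.Free (colorGraph c i)) :
    GR k F = n + 1 := by
  refine IsLeast.csInf_eq ⟨fun c hc => ?_, fun m hm => ?_⟩
  · obtain ⟨d, rfl⟩ : ∃ d : Sym2 (Fin (n + 1)) → Fin k, c = fun u v => d s(u, v) :=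
      ⟨Sym2.lift ⟨c, hc.1⟩, rfl⟩
    simpa only [hasMonoCopy_iff] using hupper d (isGallaiColoring_iff.1 hc)
  · obtain ⟨V, _, c, rfl, hG, hfree⟩ := hlower
    by_contra! hmV
    obtain ⟨f⟩ : Nonempty (Fin m ↪ V) :=
      Function.Embedding.nonempty_of_card_le (by simpa using Nat.le_of_lt_succ hmV)
    obtain ⟨i, hi⟩ := hm _ (isGallaiColoring_iff.2 (hG.comap f))
    exact hfree i ((hasMonoCopy_iff.1 hi).trans (colorGraph_comp_map_isContained c f i))

lemma almostCliqueFreeOn_one_of_free (h : GP3.Free G) : AlmostCliqueFreeOn G 1 X := by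
  by_contra hnot
  obtain ⟨K, -, hK, a, -, b, -, hab, hKab⟩ := exists_isNClique_of_not_almostCliqueFreeOn hnot
  obtain ⟨v, rfl⟩ := card_eq_one.1 hK.card_eq
  obtain ⟨hva, hvb⟩ := hKab v (mem_singleton_self v)
  refine h ⟨⟨⟨![a, v, b], fun {x y} hxy => ?_⟩, fun x y hxy => ?_⟩⟩
  · fin_cases x <;> fin_cases y <;> simp_all [GP3, adj_comm]
  · have := hva.ne
    have := hvb.ne
    fin_cases x <;> fin_cases y <;> simp_all

lemma almostCliqueFreeOn_two_of_free (h : GK3.Free G) : AlmostCliqueFreeOn G 2 X :=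
  almostCliqueFreeOn_of_cliqueFreeOn fun _ _ hK =>
    cliqueFree_iff_top_free.2 h _ hK

lemma almostCliqueFreeOn_three_of_free (h : GH3.Free G) : AlmostCliqueFreeOn G 3 X := by
  classical
  by_contra hnot
  obtain ⟨K, -, hK, a, -, b, -, hab, hKab⟩ := exists_isNClique_of_not_almostCliqueFreeOn hnot
  obtain ⟨u, v, w, huv, huw, hvw, rfl⟩ := is3Clique_iff.1 hK
  obtain ⟨hua, hub⟩ := hKab u (by simp)
  obtain ⟨hva, hvb⟩ := hKab v (by simp)
  obtain ⟨hwa, hwb⟩ := hKab w (by simp)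
  let φ : GH3 →g G := ⟨![a, b, u, v, w], fun {x y} hxy => by
    fin_cases x <;> fin_cases y <;> simp_all [GH3, adj_comm]⟩
  refine h ⟨⟨φ, fun x y hxy => ?_⟩⟩
  by_contra hne
  obtain hadj | ⟨rfl, rfl⟩ | ⟨rfl, rfl⟩ : GH3.Adj x y ∨ x = 0 ∧ y = 1 ∨ x = 1 ∧ y = 0 := by
    simp only [GH3, sdiff_adj, top_adj, fromRel_adj]
    tauto
  exacts [(φ.map_adj hadj).ne hxy, hab hxy, hab hxy.symm]

/-- The level, in the sense of `AlmostCliqueFreeOn`, of the graph that `mixPKH` forbids in the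
`i`-th colour. -/
def mixLevel (s r i : ℕ) : ℕ :=
  if i < r then 3 else if i < r + s then 2 else 1

lemma mixLevel_le_three {j : ℕ} : mixLevel s r j ≤ 3 := by
  unfold mixLevel
  split_ifs <;> simp

lemma mixPKH_mixLevel_cases (i : Fin k) :
    mixPKH k s r i = ⟨Fin 5, GH3⟩ ∧ mixLevel s r i = 3 ∨
      mixPKH k s r i = ⟨Fin 3, GK3⟩ ∧ mixLevel s r i = 2 ∨
      mixPKH k s r i = ⟨Fin 3, GP3⟩ ∧ mixLevel s r i = 1 := by
  unfold mixPKH mixLevel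
  split_ifs <;> simp

lemma almostCliqueFreeOn_mixLevel (h : (mixPKH k s r i).2.Free G) :
    AlmostCliqueFreeOn G (mixLevel s r i) X := by
  rcases mixPKH_mixLevel_cases (s := s) (r := r) i with ⟨hF, hl⟩ | ⟨hF, hl⟩ | ⟨hF, hl⟩ <;>
    rw [hF] at h <;> rw [hl]
  exacts [almostCliqueFreeOn_three_of_free h, almostCliqueFreeOn_two_of_free h,
    almostCliqueFreeOn_one_of_free h]

lemma not_cliqueFree_GH3 : ¬ GH3.CliqueFree 4 :=
  fun h => h {1, 2, 3, 4} (by simp [isNClique_iff, IsClique, Set.Pairwise, GH3])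

lemma IsLevelFree.mixPKH_free (h : IsLevelFree G (mixLevel s r i)) :
    (mixPKH k s r i).2.Free G := by
  rcases mixPKH_mixLevel_cases (s := s) (r := r) i with ⟨hF, hl⟩ | ⟨hF, hl⟩ | ⟨hF, hl⟩ <;>
    rw [hl] at h <;> rw [hF]
  · exact fun hcopy => not_cliqueFree_GH3 (h.comap hcopy)
  · exact cliqueFree_iff_top_free.1 h
  · exact h

lemma count_map_mixLevel {I : Finset ℕ} {a : ℕ} (hI : ∀ j, j ∈ I ↔ j < k ∧ mixLevel s r j = a) :
    (univ.val.map fun i : Fin k => mixLevel s r i).count a = #I := by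
  rw [Multiset.count_map, ← filter_val, card_val, ← card_map Fin.valEmbedding]
  congr 1
  ext j
  simp only [mem_map, mem_filter_univ, Fin.valEmbedding_apply, hI, eq_comm (a := a)]
  exact ⟨by rintro ⟨i, hi, rfl⟩; exact ⟨i.2, hi⟩, fun ⟨hj, hja⟩ => ⟨⟨j, hj⟩, hja, rfl⟩⟩

lemma count_two_map_mixLevel (hsr : s + r ≤ k) :
    (univ.val.map fun i : Fin k => mixLevel s r i).count 2 = s := by
  rw [count_map_mixLevel (I := Ico r (r + s)), Nat.card_Ico, Nat.add_sub_cancel_left]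
  intro j
  rw [mem_Ico, mixLevel]
  split_ifs <;> omega

lemma count_three_map_mixLevel (hr : r ≤ k) :
    (univ.val.map fun i : Fin k => mixLevel s r i).count 3 = r := by
  rw [count_map_mixLevel (I := range r), card_range]
  intro j
  rw [mem_range, mixLevel]
  split_ifs <;> omega

lemma one_mem_map_mixLevel (hsr : s + r < k) :
    1 ∈ univ.val.map fun i : Fin k => mixLevel s r i :=
  Multiset.mem_map.2 ⟨⟨r + s, by omega⟩, mem_univ_val _, by simp [mixLevel]⟩

lemma extremalOrder_map_mixLevel (hsr : s + r ≤ k) :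
    extremalOrder (univ.val.map fun i : Fin k => mixLevel s r i) = maxOrder s r := by
  rw [extremalOrder, count_two_map_mixLevel hsr, count_three_map_mixLevel (le_of_add_le_right hsr)]

lemma exists_mixPKH_isContained (hsr : s + r ≤ k) {c : Sym2 (Fin (maxOrder s r + 1)) → Fin k}
    (hG : IsGallaiOn c Set.univ) : ∃ i, (mixPKH k s r i).2 ⊑ colorGraph c i := by
  by_contra hfree
  have havoid : AvoidsLevelsOn c (fun i => mixLevel s r i) univ := fun i =>
    ⟨mixLevel_le_three, almostCliqueFreeOn_mixLevel fun h => hfree ⟨i, h⟩⟩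
  have hcard := card_le_extremalOrder (X := univ) (hG.mono (Set.subset_univ _)) havoid
  rw [extremalOrder_map_mixLevel hsr, card_univ, Fintype.card_fin] at hcard
  exact Nat.not_succ_le_self _ hcard

lemma exists_mixPKH_free (hs : Even s) (hr : Odd r) (hsr : s + r < k) :
    ∃ (V : Type) (_ : Fintype V) (c : Sym2 V → Fin k), Fintype.card V = maxOrder s r ∧
      IsGallaiOn c Set.univ ∧ ∀ i, (mixPKH k s r i).2.Free (colorGraph c i) := by
  obtain ⟨V, _, c, hcard, hG, hc⟩ :=
    realizes_extremalOrder (one_mem_map_mixLevel hsr)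
      ((count_two_map_mixLevel hsr.le).symm ▸ hs)
      ((count_three_map_mixLevel (le_of_add_le_right hsr.le)).symm ▸ hr) _ rfl
  exact ⟨V, inferInstance, c, hcard.trans (extremalOrder_map_mixLevel hsr.le), hG,
    fun i => (hc i).mixPKH_free⟩

lemma maxOrder_two_mul_add_one (s m : ℕ) : maxOrder s (2 * m + 1) = maxOrder s 1 * 17 ^ m := by
  induction m with
  | zero => simp
  | succ m ih =>
    rw [show 2 * (m + 1) + 1 = 2 * m + 1 + 2 by ring, maxOrder_add_two, ih]
    ring

lemma maxOrder_two_mul_add_two_one (l : ℕ) : maxOrder (2 * l + 2) 1 = 32 * 5 ^ l := by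
  induction l with
  | zero => simp [maxOrder]
  | succ l ih =>
    rw [show 2 * (l + 1) + 2 = 2 * l + 1 + 3 by ring, maxOrder_add_three_one, ih]
    ring

lemma maxOrder_one_eq_floor (hs : Even s) :
    maxOrder s 1 = ⌊32 * (5 : ℝ) ^ (((s : ℝ) - 2) / 2)⌋₊ := by
  obtain ⟨l, rfl⟩ := even_iff_two_dvd.1 hs
  rcases l with _ | l
  · have hexp : (((2 * 0 : ℕ) : ℝ) - 2) / 2 = -1 := by norm_num
    rw [hexp, Real.rpow_neg_one, eq_comm, Nat.floor_eq_iff (by norm_num)]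
    norm_num [maxOrder]
  · have hexp : (((2 * (l + 1) : ℕ) : ℝ) - 2) / 2 = l := by
      push_cast
      ring
    rw [hexp, Real.rpow_natCast, mul_add, mul_one, maxOrder_two_mul_add_two_one]
    exact_mod_cast (Nat.floor_natCast (32 * 5 ^ l)).symm

end GallaiRamseyNumber

end GallaiRamsey

/-- Theorem 1.5, case (b₈): s even, r odd and s + r < k implies
GR_k((k-s-r)P₃, sK₃, rH₃) = ⌊32·5^((s-2)/2)⌋·17^((r-1)/2) + 1, where the floor is of
the real number 32·5^((s-2)/2). -/
theorem GR_mixPKH_b8 (k s r : ℕ) (hk : 1 ≤ k) (hs : Even s) (hr : Odd r)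
    (hsr : s + r < k) :
    GR k (mixPKH k s r) =
      ⌊32 * (5 : ℝ) ^ (((s : ℝ) - 2) / 2)⌋₊ * 17 ^ ((r - 1) / 2) + 1 := by
  have horder : GallaiRamsey.maxOrder s r = GallaiRamsey.maxOrder s 1 * 17 ^ ((r - 1) / 2) := by
    obtain ⟨m, rfl⟩ := hr
    rw [GallaiRamsey.maxOrder_two_mul_add_one, Nat.add_sub_cancel,
      Nat.mul_div_cancel_left m two_pos]
  rw [← GallaiRamsey.maxOrder_one_eq_floor hs, ← horder]
  exact GallaiRamsey.GR_eq_add_one (fun _ => GallaiRamsey.exists_mixPKH_isContained hsr.le)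
    (GallaiRamsey.exists_mixPKH_free hs hr hsr)
end

section
/- Let c be a k-edge-coloring of the complete graph K_n, let i be a color, and let X1 and X2 be disjoint vertex sets such that every edge with one endpoint in X1 and one in X2 is colored i. If there exist two vertices of X1 joined by an edge colored i, there exist two vertices of X2 joined by an edge colored i, and |X1 ∪ X2| ≥ 5, then K_n contains a monochromatic copy of H1 in color i and a monochromatic copy of H2 in color i. -/
/- Let `G` be the graph of the edges colored `i`. An edge `ab` in `X₁` and an edge `xy` in `X₂` span
a `K₄` of `G`, and a fifth vertex `e` of `X₁ ∪ X₂` is adjacent to both ends of the edge on the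
opposite side. So among these five vertices `G` lacks at most the two edges from `e` to the edge on
its own side, and therefore contains `H₂`; and `H₂` contains `H₁`. -/

open SimpleGraph

theorem exists_mem_notMem_of_encard_lt_encard {α : Type*} {s t : Set α}
    (hst : s.encard < t.encard) : ∃ e ∈ t, e ∉ s :=
  Set.not_subset.mp fun hts ↦ hst.not_ge (Set.encard_le_encard hts)

theorem encard_le_four {α : Type*} (a b c d : α) : ({a, b, c, d} : Set α).encard ≤ 4 := by
  classical
  have hcard : (({a, b, c, d} : Finset α).card : ℕ∞) ≤ 4 := mod_cast Finset.card_le_four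
  simpa only [← Set.encard_coe_eq_coe_finsetCard, Finset.coe_insert, Finset.coe_singleton]
    using hcard

theorem GH1_isContained_GH2 : GH1 ⊑ GH2 := by
  -- Deleting vertex `1` from `H₂` leaves a `K₄`, and `1` is adjacent to `3`.
  let f : Fin 5 → Fin 5 := ![0, 2, 4, 3, 1]
  have map_adj : ∀ p q, GH1.Adj p q → GH2.Adj (f p) (f q) := by
    simp only [GH1, GH2, fromRel_adj, sdiff_adj, top_adj]
    decide
  have injective : Function.Injective f := by decide
  exact ⟨⟨f, map_adj _ _⟩, injective⟩

section Containment

variable {V : Type*} {G : SimpleGraph V} {s t : Set V}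

theorem GH2_isContained_of_isCompleteBetween_of_mem_left (hst : G.IsCompleteBetween s t)
    {a b e x y : V} (ha : a ∈ s) (hb : b ∈ s) (he : e ∈ s) (hea : e ≠ a) (heb : e ≠ b)
    (hab : G.Adj a b) (hx : x ∈ t) (hy : y ∈ t) (hxy : G.Adj x y) : GH2 ⊑ G := by
  have hax := hst ha hx
  have hay := hst ha hy
  have hbx := hst hb hx
  have hby := hst hb hy
  have hex := hst he hx
  have hey := hst he hy
  let f : Fin 5 → V := ![a, e, b, x, y]
  have map_adj : ∀ p q, GH2.Adj p q → G.Adj (f p) (f q) := by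
    intro p q hpq
    fin_cases p <;> fin_cases q <;> simp_all [GH2, f, G.adj_comm]
  have injective : Function.Injective f := by
    intro p q hpq
    fin_cases p <;> fin_cases q <;> simp_all [f, eq_comm]
  exact ⟨⟨f, map_adj _ _⟩, injective⟩

theorem GH2_isContained_of_isCompleteBetween (hst : G.IsCompleteBetween s t)
    (hs : ∃ a ∈ s, ∃ b ∈ s, G.Adj a b) (ht : ∃ x ∈ t, ∃ y ∈ t, G.Adj x y)
    (hcard : 5 ≤ (s ∪ t).encard) : GH2 ⊑ G := by
  obtain ⟨a, ha, b, hb, hab⟩ := hs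
  obtain ⟨x, hx, y, hy, hxy⟩ := ht
  have hlt : ({a, b, x, y} : Set V).encard < (s ∪ t).encard :=
    (encard_le_four a b x y).trans_lt (lt_of_lt_of_le (by norm_num) hcard)
  obtain ⟨e, he, hne⟩ := exists_mem_notMem_of_encard_lt_encard hlt
  simp only [Set.mem_insert_iff, Set.mem_singleton_iff, not_or] at hne
  obtain ⟨hea, heb, hex, hey⟩ := hne
  rcases he with he | he
  · exact GH2_isContained_of_isCompleteBetween_of_mem_left hst ha hb he hea heb hab hx hy hxy
  · exact GH2_isContained_of_isCompleteBetween_of_mem_left hst.symm hx hy he hex hey hxy ha hb hab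

theorem mono_copy_of_cross_condition1_general (hst : G.IsCompleteBetween s t)
    (hs : ∃ a ∈ s, ∃ b ∈ s, G.Adj a b) (ht : ∃ x ∈ t, ∃ y ∈ t, G.Adj x y)
    (hcard : 5 ≤ (s ∪ t).encard) : GH1 ⊑ G ∧ GH2 ⊑ G :=
  have hGH2 := GH2_isContained_of_isCompleteBetween hst hs ht hcard
  ⟨GH1_isContained_GH2.trans hGH2, hGH2⟩

end Containment

section ColorGraph

variable {V K : Type*} {c : V → V → K} {hc : ∀ u v, c u v = c v u} {i : K}

/-- The graph of the edges colored `i` in a symmetric edge-coloring `c`; the diagonal values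
`c u u` are ignored. -/
def colorGraph (c : V → V → K) (hc : ∀ u v, c u v = c v u) (i : K) : SimpleGraph V :=
  (EdgeLabeling.mk (G := ⊤) (fun u v _ ↦ c u v) fun u v _ ↦ hc v u).labelGraph i

theorem colorGraph_adj {u v : V} : (colorGraph c hc i).Adj u v ↔ u ≠ v ∧ c u v = i := by
  simp [colorGraph, EdgeLabeling.get_mk]

theorem isCompleteBetween_colorGraph {s t : Set V} (hst : Disjoint s t)
    (hcross : ∀ u ∈ s, ∀ v ∈ t, c u v = i) : (colorGraph c hc i).IsCompleteBetween s t :=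
  fun u hu v hv ↦ colorGraph_adj.mpr ⟨hst.ne_of_mem hu hv, hcross u hu v hv⟩

theorem hasMonoCopy_iff_isContained_colorGraph {W : Type} {F : SimpleGraph W} {n k : ℕ}
    {c : Fin n → Fin n → Fin k} (hc : ∀ u v, c u v = c v u) {i : Fin k} :
    HasMonoCopy F c i ↔ F ⊑ colorGraph c hc i := by
  constructor
  · rintro ⟨f, hf, hcol⟩
    exact ⟨⟨f, fun hab ↦ colorGraph_adj.mpr ⟨hf.ne hab.ne, hcol _ _ hab⟩⟩, hf⟩
  · rintro ⟨f⟩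
    exact ⟨f, f.injective, fun _ _ hab ↦ (colorGraph_adj.mp (f.toHom.map_adj hab)).2⟩

end ColorGraph

/-- Condition 1: if all edges between the disjoint sets `X₁` and `X₂` are colored `i`,
both `X₁` and `X₂` contain an edge of color `i`, and `|X₁ ∪ X₂| ≥ 5`, then there are
monochromatic copies of `H₁` and of `H₂` in color `i`. -/
theorem mono_copy_of_cross_condition1 (n k : ℕ) (c : Fin n → Fin n → Fin k)
    (hsymm : ∀ u v, c u v = c v u) (i : Fin k)
    (X1 X2 : Finset (Fin n)) (hdisj : Disjoint X1 X2)
    (hcross : ∀ u ∈ X1, ∀ v ∈ X2, c u v = i)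
    (h1 : ∃ u ∈ X1, ∃ v ∈ X1, u ≠ v ∧ c u v = i)
    (h2 : ∃ u ∈ X2, ∃ v ∈ X2, u ≠ v ∧ c u v = i)
    (hcard : 5 ≤ (X1 ∪ X2).card) :
    HasMonoCopy GH1 c i ∧ HasMonoCopy GH2 c i := by
  simpa only [hasMonoCopy_iff_isContained_colorGraph hsymm] using
    mono_copy_of_cross_condition1_general
      (isCompleteBetween_colorGraph (mod_cast hdisj) hcross)
      (by simpa only [colorGraph_adj, Finset.mem_coe] using h1)
      (by simpa only [colorGraph_adj, Finset.mem_coe] using h2)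
      (by simpa only [← Finset.coe_union, Set.encard_coe_eq_coe_finsetCard] using mod_cast hcard)
end
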